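/- arXiv:1105.4119 — 3 statements merged into one kernel-verified Lean document; each statement's English description precedes it below -/
import Mathlib

section
/- Let X be a random variable with E|X|³ < ∞ having an absolutely continuous distribution with density p, characteristic function f, and let Z be standard normal. For a real parameter α define g_α(t) = e^{−t²/2}·(1 + α·(it)³/3!), which is the Fourier transform of φ_α(x) = φ(x)·(1 + α·(x³ − 3x)/3!), where φ is the standard normal density. Then for every real α, D(X‖Z) ≤ α² + 4·(‖f − g_α‖₂ + ‖f′′′ − g_α′′′‖₂), where ‖u‖₂ is the L²-norm on the real line. -/
open MeasureTheory
open scoped ENNReal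

/-- The standard normal density `φ(x) = (2π)^{-1/2} e^{-x²/2}`. -/
noncomputable def stdNormalPDF (x : ℝ) : ℝ :=
  (Real.sqrt (2 * Real.pi))⁻¹ * Real.exp (-x ^ 2 / 2)

/-- `p` is a probability density on the real line. -/
def IsProbDensity (p : ℝ → ℝ) : Prop :=
  Measurable p ∧ (∀ x, 0 ≤ p x) ∧ (∫ x, p x = 1)

/-- The characteristic function `f(t) = ∫ e^{itx} p(x) dx`. -/
noncomputable def charFn (p : ℝ → ℝ) (t : ℝ) : ℂ :=
  ∫ x : ℝ, Complex.exp (Complex.I * t * x) * (p x : ℂ)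

/-- The Edgeworth-corrected normal characteristic function
`g_α(t) = e^{-t²/2}·(1 + α·(it)³/3!)`, the Fourier transform of
`φ_α(x) = φ(x)(1 + α(x³-3x)/3!)`. -/
noncomputable def gAlpha (α : ℝ) (t : ℝ) : ℂ :=
  Complex.exp (-(t : ℂ) ^ 2 / 2) * (1 + (α : ℂ) * (Complex.I * t) ^ 3 / 6)

/-!
With `klFun r = r log r + 1 - r`, the divergence is `D(X‖Z) = ∫ φ klFun(p/φ)`. Since `klFun` is
convex with derivative `log`, comparing its values at `r` and at `1 + a` gives
`klFun r ≤ a² + |r - 1 - a| M` as soon as `M ≥ max(2, log r)`. For `r = p/φ` and `1 + a = φ_α/φ`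
one may take `M = 2 + x²/2 + 2√p`. The term `φ a²` integrates to `α²/6`, because the Hermite
polynomial `x³ - 3x` has squared norm `3!` in `L²(φ)`. The term `|p - φ_α| M` is handled by
Cauchy–Schwarz against `√p`, of norm `1`, and against `(1 + x²)^{-1/2}`, of norm `√π ≤ 2`, which
costs the norms `‖p - φ_α‖₂` and `‖x³(p - φ_α)‖₂`. By Plancherel these are `(2π)^{-1/2}` times
`‖f - g_α‖₂` and `‖f''' - g_α'''‖₂`.
-/

lemma eLpNorm_eq_top_of_not_memLp {Ω F : Type*} [MeasurableSpace Ω] [NormedAddCommGroup F]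
    {μ : Measure Ω} {r : ℝ≥0∞} {v : Ω → F} (hv : AEStronglyMeasurable v μ) (h : ¬ MemLp v r μ) :
    eLpNorm v r μ = ∞ :=
  not_lt_top_iff.1 fun hlt ↦ h ⟨hv, hlt⟩

section Plancherel

open SchwartzMap FourierTransform

variable {E F : Type*} [NormedAddCommGroup E] [InnerProductSpace ℝ E] [FiniteDimensional ℝ E]
  [MeasurableSpace E] [BorelSpace E]
  [NormedAddCommGroup F] [InnerProductSpace ℂ F]

lemma continuous_fourier_of_integrable {v : E → F} (hv : Integrable v) : Continuous (𝓕 v) :=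
  VectorFourier.fourierIntegral_continuous Real.continuous_fourierChar continuous_inner hv

variable [CompleteSpace F]

lemma integral_fourier_smul_eq_of_integrable (χ : 𝓢(E, ℂ)) {v : E → F} (hv : Integrable v) :
    ∫ x, 𝓕 χ x • v x = ∫ x, χ x • 𝓕 v x := by
  simpa using! VectorFourier.integral_fourierIntegral_smul_eq_flip (L := innerₗ E)
    Real.continuous_fourierChar continuous_inner χ.integrable hv

lemma integral_fourier_smul_eq_of_Lp_two (χ : 𝓢(E, ℂ)) (w : Lp (α := E) F 2) :
    ∫ x, 𝓕 χ x • w x = ∫ x, χ x • (𝓕 w : Lp (α := E) F 2) x := by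
  simpa only [TemperedDistribution.fourier_apply, Lp.toTemperedDistribution_apply] using
    congrArg (· χ) (Lp.fourier_toTemperedDistribution_eq w)

lemma ae_eq_of_integral_fourier_smul_eq {v w : E → F} (hv : LocallyIntegrable v)
    (hw : LocallyIntegrable w) (h : ∀ χ : 𝓢(E, ℂ), ∫ x, 𝓕 χ x • v x = ∫ x, 𝓕 χ x • w x) :
    v =ᵐ[volume] w := by
  refine ae_eq_of_integral_contDiff_smul_eq hv hw fun g g_smooth g_supp ↦ ?_
  let ψ : 𝓢(E, ℂ) := (g_supp.comp_left (g := Complex.ofReal) Complex.ofReal_zero).toSchwartzMap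
    (Complex.ofRealCLM.contDiff.comp g_smooth)
  have integral_ψ (f : E → F) : ∫ x, g x • f x = ∫ x, 𝓕 (𝓕⁻ ψ) x • f x := by
    rw [fourier_fourierInv_eq ψ]
    exact integral_congr_ae <| .of_forall fun x ↦ (Complex.coe_smul (g x) (f x)).symm
  rw [integral_ψ v, integral_ψ w, h]

lemma fourier_ae_eq_fourier_toLp {v : E → F} (hv : Integrable v) (hv₂ : MemLp v 2) :
    𝓕 v =ᵐ[volume] (𝓕 (hv₂.toLp v) : Lp (α := E) F 2) := by
  refine ae_eq_of_integral_fourier_smul_eq (continuous_fourier_of_integrable hv).locallyIntegrable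
    ((Lp.memLp _).locallyIntegrable one_le_two) fun χ ↦ ?_
  rw [← integral_fourier_smul_eq_of_Lp_two, ← integral_fourier_smul_eq_of_integrable _ hv]
  exact integral_congr_ae <| hv₂.coeFn_toLp.symm.mono fun x hx ↦ congrArg _ hx

lemma ae_eq_fourierInv_toLp_fourier {v : E → F} (hv : Integrable v) (hFv : MemLp (𝓕 v) 2) :
    v =ᵐ[volume] (𝓕⁻ (hFv.toLp (𝓕 v)) : Lp (α := E) F 2) := by
  refine ae_eq_of_integral_fourier_smul_eq hv.locallyIntegrable
    ((Lp.memLp _).locallyIntegrable one_le_two) fun χ ↦ ?_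
  rw [integral_fourier_smul_eq_of_Lp_two, integral_fourier_smul_eq_of_integrable χ hv,
    fourier_fourierInv_eq]
  exact integral_congr_ae <| hFv.coeFn_toLp.symm.mono fun x hx ↦ congrArg _ hx

theorem eLpNorm_fourier_of_integrable {v : E → F} (hv : Integrable v) :
    eLpNorm (𝓕 v) 2 volume = eLpNorm v 2 volume := by
  by_cases hv₂ : MemLp v 2 volume
  · calc eLpNorm (𝓕 v) 2 volume
        = ‖(𝓕 (hv₂.toLp v) : Lp (α := E) F 2 volume)‖ₑ := by
          rw [Lp.enorm_def, eLpNorm_congr_ae (fourier_ae_eq_fourier_toLp hv hv₂)]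
      _ = ‖hv₂.toLp v‖ₑ := by rw [← ofReal_norm, Lp.norm_fourier_eq, ofReal_norm]
      _ = eLpNorm v 2 volume := Lp.enorm_toLp ..
  · have hFv : ¬ MemLp (𝓕 v) 2 volume := fun hFv ↦
      hv₂ ((memLp_congr_ae (ae_eq_fourierInv_toLp_fourier hv hFv)).2 (Lp.memLp _))
    rw [eLpNorm_eq_top_of_not_memLp (continuous_fourier_of_integrable hv).aestronglyMeasurable hFv,
      eLpNorm_eq_top_of_not_memLp hv.aestronglyMeasurable hv₂]

end Plancherel

section CharFn

open FourierTransform Complex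

lemma charFn_eq_fourier (q : ℝ → ℝ) (t : ℝ) :
    charFn q t = 𝓕 (fun x ↦ (q x : ℂ)) (-(2 * Real.pi)⁻¹ * t) := by
  have hπ : (Real.pi : ℂ) ≠ 0 := by exact_mod_cast Real.pi_ne_zero
  rw [Real.fourier_real_eq_integral_exp_smul, charFn]
  refine integral_congr_ae (.of_forall fun x ↦ ?_)
  simp only [smul_eq_mul]
  congr 2
  push_cast
  field_simp

lemma integrable_exp_mul_ofReal {q : ℝ → ℝ} (hq : Integrable q) (t : ℝ) :
    Integrable fun x : ℝ ↦ exp (I * t * x) * (q x : ℂ) := by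
  refine hq.ofReal.bdd_mul (c := 1) (by fun_prop) (.of_forall fun x ↦ ?_)
  simp [norm_exp]

lemma charFn_add_const_mul {q r : ℝ → ℝ} (hq : Integrable q) (hr : Integrable r) (c t : ℝ) :
    charFn (fun x ↦ q x + c * r x) t = charFn q t + c * charFn r t := by
  simp only [charFn]
  rw [← integral_const_mul, ← integral_add (integrable_exp_mul_ofReal hq t)
    ((integrable_exp_mul_ofReal hr t).const_mul _)]
  congr with x
  push_cast
  ring

lemma charFn_sub {q r : ℝ → ℝ} (hq : Integrable q) (hr : Integrable r) (t : ℝ) :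
    charFn (fun x ↦ q x - r x) t = charFn q t - charFn r t := by
  simpa [sub_eq_add_neg] using charFn_add_const_mul hq hr (-1) t

lemma charFn_of_hasDerivAt {q q' : ℝ → ℝ} (hq : Integrable q) (hq' : Integrable q')
    (h : ∀ x, HasDerivAt q (q' x) x) (t : ℝ) : charFn q' t = -(I * t) * charFn q t := by
  have hderiv : deriv (fun x ↦ (q x : ℂ)) = fun x ↦ (q' x : ℂ) :=
    funext fun x ↦ (h x).ofReal_comp.deriv
  have hfourier := congrFun (Real.fourier_deriv hq.ofReal
    (fun x ↦ (h x).ofReal_comp.differentiableAt) (hderiv ▸ hq'.ofReal)) (-(2 * Real.pi)⁻¹ * t)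
  have hπ : (Real.pi : ℂ) ≠ 0 := by exact_mod_cast Real.pi_ne_zero
  rw [charFn_eq_fourier, ← hderiv, hfourier, charFn_eq_fourier, smul_eq_mul]
  push_cast
  field_simp

lemma hasDerivAt_charFn {q : ℝ → ℝ} (hq : Integrable q) (hxq : Integrable fun x ↦ x * q x)
    (t : ℝ) : HasDerivAt (charFn q) (I * charFn (fun x ↦ x * q x) t) t := by
  have hfourier := Real.hasDerivAt_fourier (f := fun x ↦ (q x : ℂ)) hq.ofReal
    (by simpa using hxq.ofReal (𝕜 := ℂ)) (-(2 * Real.pi)⁻¹ * t)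
  have hcomp := hfourier.scomp t ((hasDerivAt_id t).const_mul (-(2 * Real.pi)⁻¹))
  rw [funext (charFn_eq_fourier q)]
  refine hcomp.congr_deriv ?_
  have hπ : (Real.pi : ℂ) ≠ 0 := by exact_mod_cast Real.pi_ne_zero
  rw [charFn_eq_fourier, Real.fourier_real_eq_integral_exp_smul,
    Real.fourier_real_eq_integral_exp_smul, ← integral_const_mul, ← integral_smul]
  congr with x
  simp only [smul_eq_mul, real_smul]
  push_cast
  field_simp

lemma iteratedDeriv_charFn {n : ℕ} {q : ℝ → ℝ} (hq : ∀ k ≤ n, Integrable fun x ↦ x ^ k * q x) :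
    iteratedDeriv n (charFn q) = fun t ↦ I ^ n * charFn (fun x ↦ x ^ n * q x) t := by
  induction n with
  | zero => simp
  | succ n ih =>
    ext t
    rw [iteratedDeriv_succ, ih fun k hk ↦ hq k (hk.trans n.le_succ)]
    have hpow : (fun x ↦ x * (x ^ n * q x)) = fun x ↦ x ^ (n + 1) * q x := by ext x; ring
    have hderiv := hasDerivAt_charFn (hq n n.le_succ) (hpow ▸ hq (n + 1) le_rfl) t
    rw [(hderiv.const_mul (I ^ n)).deriv, hpow]
    ring

lemma eLpNorm_charFn {q : ℝ → ℝ} (hq : Integrable q) :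
    eLpNorm (charFn q) 2 volume = ENNReal.ofReal (√(2 * Real.pi)) * eLpNorm q 2 volume := by
  have hc : -(2 * Real.pi)⁻¹ ≠ 0 := by simp [Real.pi_ne_zero]
  have hcont : Continuous (𝓕 fun x ↦ (q x : ℂ)) := continuous_fourier_of_integrable hq.ofReal
  calc eLpNorm (charFn q) 2 volume
      = eLpNorm (𝓕 fun x ↦ (q x : ℂ)) 2 (volume.map (-(2 * Real.pi)⁻¹ * ·)) := by
        rw [eLpNorm_map_measure hcont.aestronglyMeasurable (by fun_prop),
          funext (charFn_eq_fourier q)]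
        rfl
    _ = ENNReal.ofReal (√(2 * Real.pi)) * eLpNorm (𝓕 fun x ↦ (q x : ℂ)) 2 volume := by
        rw [Real.map_volume_mul_left hc, eLpNorm_smul_measure_of_ne_top (by simp), smul_eq_mul,
          Real.sqrt_eq_rpow, ← ENNReal.ofReal_rpow_of_nonneg (by positivity) (by simp)]
        simp [abs_of_pos Real.pi_pos]
    _ = ENNReal.ofReal (√(2 * Real.pi)) * eLpNorm q 2 volume := by
        rw [eLpNorm_fourier_of_integrable hq.ofReal]
        congr 1
        exact eLpNorm_congr_norm_ae (by simp)

theorem eLpNorm_iteratedDeriv_charFn_sub {n : ℕ} {q r : ℝ → ℝ}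
    (hq : ∀ k ≤ n, Integrable fun x ↦ x ^ k * q x)
    (hr : ∀ k ≤ n, Integrable fun x ↦ x ^ k * r x) :
    eLpNorm (fun t ↦ iteratedDeriv n (charFn q) t - iteratedDeriv n (charFn r) t) 2 volume =
      ENNReal.ofReal (√(2 * Real.pi)) * eLpNorm (fun x ↦ x ^ n * (q x - r x)) 2 volume := by
  have hsub : Integrable fun x ↦ x ^ n * q x - x ^ n * r x := (hq n le_rfl).sub (hr n le_rfl)
  simp only [mul_sub]
  rw [← eLpNorm_charFn hsub, iteratedDeriv_charFn hq, iteratedDeriv_charFn hr]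
  refine eLpNorm_congr_norm_ae (.of_forall fun t ↦ ?_)
  simp [← mul_sub, ← charFn_sub (hq n le_rfl) (hr n le_rfl)]

end CharFn

section StdNormal

open Polynomial ProbabilityTheory

lemma stdNormalPDF_pos (x : ℝ) : 0 < stdNormalPDF x := by
  unfold stdNormalPDF
  positivity

lemma stdNormalPDF_eq_gaussianPDFReal : stdNormalPDF = gaussianPDFReal 0 1 := by
  ext x
  simp [stdNormalPDF, gaussianPDFReal]

lemma measurable_stdNormalPDF : Measurable stdNormalPDF := by
  unfold stdNormalPDF
  fun_prop

lemma integrable_stdNormalPDF : Integrable stdNormalPDF :=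
  stdNormalPDF_eq_gaussianPDFReal ▸ integrable_gaussianPDFReal 0 1

lemma integral_stdNormalPDF : ∫ x, stdNormalPDF x = 1 := by
  rw [stdNormalPDF_eq_gaussianPDFReal, integral_gaussianPDFReal_eq_one 0 one_ne_zero]

lemma gaussianReal_eq_withDensity_stdNormalPDF :
    gaussianReal 0 1 = volume.withDensity fun x ↦ ENNReal.ofReal (stdNormalPDF x) := by
  rw [gaussianReal_of_var_ne_zero 0 one_ne_zero, stdNormalPDF_eq_gaussianPDFReal]
  rfl

lemma hasDerivAt_stdNormalPDF (x : ℝ) : HasDerivAt stdNormalPDF (-x * stdNormalPDF x) x := by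
  have hexponent : HasDerivAt (fun y : ℝ ↦ -y ^ 2 / 2) (-x) x :=
    ((hasDerivAt_pow 2 x).fun_neg.div_const 2).congr_deriv (by norm_num; ring)
  exact (hexponent.exp.const_mul _).congr_deriv (by rw [stdNormalPDF]; ring)

lemma charFn_stdNormalPDF (t : ℝ) : charFn stdNormalPDF t = Complex.exp (-(t : ℂ) ^ 2 / 2) := by
  have h := charFun_gaussianReal (μ := 0) (v := 1) t
  rw [charFun_apply_real, integral_gaussianReal_eq_integral_smul one_ne_zero,
    ← stdNormalPDF_eq_gaussianPDFReal] at h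
  calc charFn stdNormalPDF t = ∫ x, stdNormalPDF x • Complex.exp (t * x * Complex.I) := by
        refine integral_congr_ae (.of_forall fun x ↦ ?_)
        simp [mul_comm, mul_left_comm]
    _ = Complex.exp (-(t : ℂ) ^ 2 / 2) := by simpa [neg_div] using h

lemma integrable_stdNormalPDF_mul_eval (P : ℝ[X]) :
    Integrable fun x ↦ stdNormalPDF x * P.eval x := by
  induction P using Polynomial.induction_on' with
  | add P Q hP hQ => simpa only [eval_add, mul_add] using! hP.add hQ
  | monomial n c =>
    have hgauss := integrable_rpow_mul_exp_neg_mul_sq (b := 1 / 2) (by norm_num) (s := n)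
      (by linarith [n.cast_nonneg (α := ℝ)])
    refine (hgauss.const_mul (c * (√(2 * Real.pi))⁻¹)).congr (.of_forall fun x ↦ ?_)
    simp only [stdNormalPDF, Real.rpow_natCast, eval_monomial]
    rw [show -(1 / 2 : ℝ) * x ^ 2 = -x ^ 2 / 2 by ring]
    ring

lemma hasDerivAt_stdNormalPDF_mul_eval (P : ℝ[X]) (x : ℝ) :
    HasDerivAt (fun y ↦ stdNormalPDF y * P.eval y)
      (-(stdNormalPDF x * (X * P - derivative P).eval x)) x :=
  ((hasDerivAt_stdNormalPDF x).mul (P.hasDerivAt x)).congr_deriv (by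
    simp only [eval_sub, eval_mul, eval_X]; ring)

lemma charFn_stdNormalPDF_mul_X_mul_sub_derivative (P : ℝ[X]) (t : ℝ) :
    charFn (fun x ↦ stdNormalPDF x * (X * P - derivative P).eval x) t =
      Complex.I * t * charFn (fun x ↦ stdNormalPDF x * P.eval x) t := by
  have hderiv (x : ℝ) : HasDerivAt (fun y ↦ -(stdNormalPDF y * P.eval y))
      (stdNormalPDF x * (X * P - derivative P).eval x) x :=
    (hasDerivAt_stdNormalPDF_mul_eval P x).fun_neg.congr_deriv (neg_neg _)
  rw [charFn_of_hasDerivAt (integrable_stdNormalPDF_mul_eval P).neg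
    (integrable_stdNormalPDF_mul_eval _) hderiv]
  simp [charFn, integral_neg]

lemma integral_stdNormalPDF_mul_X_mul (P : ℝ[X]) :
    ∫ x, stdNormalPDF x * (X * P).eval x = ∫ x, stdNormalPDF x * (derivative P).eval x := by
  have hzero := integral_eq_zero_of_hasDerivAt_of_integrable (hasDerivAt_stdNormalPDF_mul_eval P)
    (integrable_stdNormalPDF_mul_eval _).neg (integrable_stdNormalPDF_mul_eval P)
  simp only [eval_sub, mul_sub] at hzero
  rw [integral_neg, neg_eq_zero, integral_sub (integrable_stdNormalPDF_mul_eval _)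
    (integrable_stdNormalPDF_mul_eval _)] at hzero
  exact sub_eq_zero.1 hzero

/-- The probabilists' Hermite polynomial `Heₙ`, with real coefficients. -/
noncomputable def realHermite (n : ℕ) : ℝ[X] := (hermite n).map (Int.castRingHom ℝ)

lemma realHermite_succ (n : ℕ) :
    realHermite (n + 1) = X * realHermite n - derivative (realHermite n) := by
  simp [realHermite, hermite_succ, derivative_map]

lemma charFn_stdNormalPDF_mul_realHermite (n : ℕ) (t : ℝ) :
    charFn (fun x ↦ stdNormalPDF x * (realHermite n).eval x) t =
      (Complex.I * t) ^ n * Complex.exp (-(t : ℂ) ^ 2 / 2) := by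
  induction n with
  | zero => simp [realHermite, charFn_stdNormalPDF]
  | succ n ih => rw [realHermite_succ, charFn_stdNormalPDF_mul_X_mul_sub_derivative, ih]; ring

lemma integral_stdNormalPDF_mul_realHermite_mul (n : ℕ) (P : ℝ[X]) :
    ∫ x, stdNormalPDF x * (realHermite n * P).eval x =
      ∫ x, stdNormalPDF x * (derivative^[n] P).eval x := by
  induction n generalizing P with
  | zero => simp [realHermite]
  | succ n ih =>
    have hexpand : realHermite (n + 1) * P =
        X * (realHermite n * P) - derivative (realHermite n) * P := by
      rw [realHermite_succ]; ring
    rw [Function.iterate_succ_apply, ← ih, hexpand]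
    simp only [eval_sub, mul_sub]
    rw [integral_sub (integrable_stdNormalPDF_mul_eval _) (integrable_stdNormalPDF_mul_eval _),
      integral_stdNormalPDF_mul_X_mul, derivative_mul]
    simp only [eval_add, mul_add]
    rw [integral_add (integrable_stdNormalPDF_mul_eval _) (integrable_stdNormalPDF_mul_eval _),
      add_sub_cancel_left]

lemma iterate_derivative_realHermite (n : ℕ) :
    derivative^[n] (realHermite n) = C (n.factorial : ℝ) := by
  have hmonic : (realHermite n).Monic := (hermite_monic n).map _
  have hdegree : (realHermite n).natDegree = n := by
    rw [realHermite, (hermite_monic n).natDegree_map, natDegree_hermite]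
  rw [eq_C_of_natDegree_eq_zero (p := derivative^[n] (realHermite n))
    (by have := natDegree_iterate_derivative (realHermite n) n; omega), coeff_iterate_derivative]
  have hcoeff : (realHermite n).coeff n = 1 := by simpa [hdegree] using hmonic.coeff_natDegree
  simp [hcoeff, Nat.descFactorial_self]

lemma integral_stdNormalPDF_mul_realHermite_sq (n : ℕ) :
    ∫ x, stdNormalPDF x * (realHermite n).eval x ^ 2 = n.factorial := by
  simp only [pow_two, ← eval_mul]
  rw [integral_stdNormalPDF_mul_realHermite_mul, iterate_derivative_realHermite]
  simp [integral_mul_const, integral_stdNormalPDF]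

lemma lintegral_stdNormalPDF_mul_realHermite_sq (n : ℕ) (c : ℝ) :
    ∫⁻ x, ENNReal.ofReal (stdNormalPDF x * (c * (realHermite n).eval x) ^ 2) =
      ENNReal.ofReal (c ^ 2 * n.factorial) := by
  have hscale (x : ℝ) : stdNormalPDF x * (c * (realHermite n).eval x) ^ 2 =
      c ^ 2 * (stdNormalPDF x * (realHermite n).eval x ^ 2) := by ring
  have hint : Integrable fun x ↦ stdNormalPDF x * (realHermite n).eval x ^ 2 := by
    simp only [← eval_pow]
    exact integrable_stdNormalPDF_mul_eval _
  simp only [hscale]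
  rw [← ofReal_integral_eq_lintegral_ofReal (hint.const_mul _)
    (.of_forall fun x ↦
      mul_nonneg (sq_nonneg c) (mul_nonneg (stdNormalPDF_pos x).le (sq_nonneg _))),
    integral_const_mul, integral_stdNormalPDF_mul_realHermite_sq]

/-- The third-order Edgeworth correction `φ_α` of the standard normal density, with `x³ - 3x`
written as the Hermite polynomial `He₃`. -/
noncomputable def edgeworthPDF (α x : ℝ) : ℝ :=
  stdNormalPDF x * (1 + α / 6 * (realHermite 3).eval x)

lemma integrable_pow_mul_edgeworthPDF (α : ℝ) (n : ℕ) :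
    Integrable fun x ↦ x ^ n * edgeworthPDF α x := by
  refine (integrable_stdNormalPDF_mul_eval (X ^ n * (1 + C (α / 6) * realHermite 3))).congr
    (.of_forall fun x ↦ ?_)
  simp only [edgeworthPDF, eval_mul, eval_pow, eval_X, eval_add, eval_one, eval_C]
  ring

lemma charFn_edgeworthPDF (α : ℝ) : charFn (edgeworthPDF α) = gAlpha α := by
  ext t
  have hsplit : edgeworthPDF α = fun x ↦ stdNormalPDF x * (realHermite 0).eval x +
      α / 6 * (stdNormalPDF x * (realHermite 3).eval x) := by
    ext x
    simp only [edgeworthPDF, realHermite, hermite_zero, Polynomial.map_one, map_one, eval_one]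
    ring
  rw [hsplit, charFn_add_const_mul (integrable_stdNormalPDF_mul_eval _)
    (integrable_stdNormalPDF_mul_eval _), charFn_stdNormalPDF_mul_realHermite,
    charFn_stdNormalPDF_mul_realHermite, gAlpha]
  push_cast
  ring

end StdNormal

section KullbackFunction

open InformationTheory

lemma klFun_le_sub_one_sq {r : ℝ} (hr : 0 ≤ r) : klFun r ≤ (r - 1) ^ 2 := by
  rcases hr.eq_or_lt with rfl | hr
  · simp [klFun_zero]
  · have hlog := mul_le_mul_of_nonneg_left (Real.log_le_sub_one_of_pos hr) hr.le
    rw [klFun_apply]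
    linarith

lemma klFun_add_log_mul_sub_le {r s : ℝ} (hr : 0 < r) (hs : 0 ≤ s) :
    klFun r + Real.log r * (s - r) ≤ klFun s := by
  have hbregman : klFun s - (klFun r + Real.log r * (s - r)) = r * klFun (s / r) := by
    rcases hs.eq_or_lt with rfl | hs
    · simp only [klFun_apply, zero_div]
      ring
    · simp only [klFun_apply, Real.log_div hs.ne' hr.ne']
      field_simp
      ring
  linarith [mul_nonneg hr.le (klFun_nonneg (div_nonneg hs hr.le))]

lemma klFun_le_sq_add_abs_mul {r a M : ℝ} (hr : 0 ≤ r) (hM : 2 ≤ M) (hlog : Real.log r ≤ M) :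
    klFun r ≤ a ^ 2 + |r - 1 - a| * M := by
  rcases le_or_gt r 1 with hr_le | hr_gt
  · calc klFun r ≤ (r - 1) ^ 2 := klFun_le_sub_one_sq hr
      _ ≤ a ^ 2 + |(r - 1 - a) * (2 * (r - 1))| := by
        linarith [le_abs_self ((r - 1 - a) * (2 * (r - 1))), sq_nonneg (r - 1 - a)]
      _ ≤ a ^ 2 + |r - 1 - a| * M := by
        rw [abs_mul]
        gcongr
        exact abs_le.2 ⟨by linarith, by linarith⟩
  · have hlog_nonneg : 0 ≤ Real.log r := Real.log_nonneg hr_gt.le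
    suffices klFun r ≤ a ^ 2 + (r - 1 - a) * Real.log r from
      this.trans (by gcongr; exact le_abs_self _)
    rcases le_or_gt 0 (1 + a) with ha | ha
    · linarith [klFun_add_log_mul_sub_le (zero_lt_one.trans hr_gt) ha, klFun_le_sub_one_sq ha]
    · rw [klFun_apply]
      nlinarith [mul_nonneg (neg_nonneg.2 ha.le) hlog_nonneg]

lemma mul_klFun_div_le {p q a M : ℝ} (hp : 0 ≤ p) (hq : 0 < q) (hM : 2 ≤ M)
    (hlog : Real.log (p / q) ≤ M) :
    q * klFun (p / q) ≤ q * a ^ 2 + |p - q * (1 + a)| * M := by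
  have habs : |p - q * (1 + a)| = q * |p / q - 1 - a| := by
    rw [← abs_of_pos hq, ← abs_mul, abs_of_pos hq]
    congr 1
    field_simp
    ring
  calc q * klFun (p / q) ≤ q * (a ^ 2 + |p / q - 1 - a| * M) := by
        gcongr
        exact klFun_le_sq_add_abs_mul (div_nonneg hp hq.le) hM hlog
    _ = q * a ^ 2 + |p - q * (1 + a)| * M := by rw [habs]; ring

variable {Ω : Type*} [MeasurableSpace Ω] {μ : Measure Ω} {p q : Ω → ℝ}

lemma klDiv_withDensity_ofReal (hp : Integrable p μ) (hq : Integrable q μ)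
    (hp_meas : Measurable p) (hq_meas : Measurable q) (hp_nonneg : ∀ x, 0 ≤ p x)
    (hq_pos : ∀ x, 0 < q x) :
    klDiv (μ.withDensity fun x ↦ ENNReal.ofReal (p x))
        (μ.withDensity fun x ↦ ENNReal.ofReal (q x)) =
      ∫⁻ x, ENNReal.ofReal (q x * klFun (p x / q x)) ∂μ := by
  set ν := μ.withDensity fun x ↦ ENNReal.ofReal (q x) with hν
  have : IsFiniteMeasure ν := isFiniteMeasure_withDensity_ofReal hq.2
  have : IsFiniteMeasure (μ.withDensity fun x ↦ ENNReal.ofReal (p x)) :=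
    isFiniteMeasure_withDensity_ofReal hp.2
  have hratio_meas : Measurable fun x ↦ ENNReal.ofReal (p x / q x) :=
    (hp_meas.div hq_meas).ennreal_ofReal
  have hchange : μ.withDensity (fun x ↦ ENNReal.ofReal (p x)) =
      ν.withDensity fun x ↦ ENNReal.ofReal (p x / q x) := by
    rw [hν, ← withDensity_mul _ hq_meas.ennreal_ofReal hratio_meas]
    congr with x
    rw [Pi.mul_apply, ← ENNReal.ofReal_mul (hq_pos x).le, mul_div_cancel₀ _ (hq_pos x).ne']
  have hrnDeriv : (μ.withDensity fun x ↦ ENNReal.ofReal (p x)).rnDeriv ν =ᵐ[ν]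
      fun x ↦ ENNReal.ofReal (p x / q x) := hchange ▸ ν.rnDeriv_withDensity hratio_meas
  have hklFun_meas : Measurable fun x ↦ klFun (p x / q x) :=
    measurable_klFun.comp (hp_meas.div hq_meas)
  rw [klDiv_eq_lintegral_klFun_of_ac (hchange ▸ withDensity_absolutelyContinuous _ _)]
  calc _ = ∫⁻ x, ENNReal.ofReal (klFun (p x / q x)) ∂ν := by
        refine lintegral_congr_ae (hrnDeriv.mono fun x hx ↦ ?_)
        simp only [hx, ENNReal.toReal_ofReal (div_nonneg (hp_nonneg x) (hq_pos x).le)]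
    _ = ∫⁻ x, ENNReal.ofReal (q x * klFun (p x / q x)) ∂μ := by
        rw [hν, lintegral_withDensity_eq_lintegral_mul _ hq_meas.ennreal_ofReal
          hklFun_meas.ennreal_ofReal]
        simp only [Pi.mul_apply, ENNReal.ofReal_mul (hq_pos _).le]

-- If `p * log (p / q)` is not integrable, the integral on the left is `0` by convention.
lemma ofReal_integral_mul_log_div_le_klDiv (hp : Integrable p μ) (hq : Integrable q μ)
    (hp_meas : Measurable p) (hq_meas : Measurable q) (hp_nonneg : ∀ x, 0 ≤ p x)
    (hq_pos : ∀ x, 0 < q x) (hmass : ∫ x, p x ∂μ = ∫ x, q x ∂μ) :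
    ENNReal.ofReal (∫ x, p x * Real.log (p x / q x) ∂μ) ≤
      klDiv (μ.withDensity fun x ↦ ENNReal.ofReal (p x))
        (μ.withDensity fun x ↦ ENNReal.ofReal (q x)) := by
  rw [klDiv_withDensity_ofReal hp hq hp_meas hq_meas hp_nonneg hq_pos]
  by_cases hint : Integrable (fun x ↦ p x * Real.log (p x / q x)) μ
  · have hklFun (x : Ω) :
        q x * klFun (p x / q x) = p x * Real.log (p x / q x) + q x - p x := by
      have := (hq_pos x).ne'
      rw [klFun_apply]
      field_simp
    have hmean : ∫ x, p x * Real.log (p x / q x) ∂μ = ∫ x, q x * klFun (p x / q x) ∂μ := by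
      simp only [hklFun]
      rw [integral_sub (hint.fun_add hq) hp, integral_add hint hq, hmass, add_sub_cancel_right]
    rw [hmean, ofReal_integral_eq_lintegral_ofReal]
    · simp only [hklFun]
      exact (hint.add hq).sub hp
    · exact .of_forall fun x ↦ mul_nonneg (hq_pos x).le
        (klFun_nonneg (div_nonneg (hp_nonneg x) (hq_pos x).le))
  · simp [integral_undef hint]

end KullbackFunction

section WeightedBound

open InformationTheory

lemma lintegral_enorm_mul_le_eLpNorm_two {Ω : Type*} [MeasurableSpace Ω] {μ : Measure Ω}
    {f g : Ω → ℝ} (hf : AEStronglyMeasurable f μ) (hg : AEStronglyMeasurable g μ) :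
    ∫⁻ x, ‖f x * g x‖ₑ ∂μ ≤ eLpNorm f 2 μ * eLpNorm g 2 μ := by
  calc ∫⁻ x, ‖f x * g x‖ₑ ∂μ = eLpNorm (f • g) 1 μ := by
        simp only [eLpNorm_one_eq_lintegral_enorm, smul_eq_mul, Pi.mul_apply]
    _ ≤ eLpNorm f 2 μ * eLpNorm g 2 μ := eLpNorm_smul_le_mul_eLpNorm hg hf

lemma eLpNorm_two_sqrt {Ω : Type*} [MeasurableSpace Ω] {μ : Measure Ω} {h : Ω → ℝ}
    (hint : Integrable h μ) (hnonneg : ∀ x, 0 ≤ h x) :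
    eLpNorm (fun x ↦ √(h x)) 2 μ = ENNReal.ofReal √(∫ x, h x ∂μ) := by
  have henorm (x : Ω) : ‖√(h x)‖ₑ ^ (2 : ℝ) = ENNReal.ofReal (h x) := by
    rw [Real.enorm_of_nonneg (Real.sqrt_nonneg _), ENNReal.ofReal_rpow_of_nonneg
      (Real.sqrt_nonneg _) zero_le_two, Real.rpow_two, Real.sq_sqrt (hnonneg x)]
  rw [eLpNorm_eq_lintegral_rpow_enorm_toReal two_ne_zero ENNReal.ofNat_ne_top]
  simp only [ENNReal.toReal_ofNat, henorm]
  rw [← ofReal_integral_eq_lintegral_ofReal hint (.of_forall hnonneg), ENNReal.ofReal_rpow_of_nonneg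
    (integral_nonneg hnonneg) (by positivity), Real.sqrt_eq_rpow]

lemma eLpNorm_two_sqrt_inv_one_add_sq_le :
    eLpNorm (fun x : ℝ ↦ √(1 + x ^ 2)⁻¹) 2 volume ≤ 2 := by
  rw [eLpNorm_two_sqrt integrable_inv_one_add_sq (fun x ↦ by positivity),
    integral_univ_inv_one_add_sq, ← ENNReal.ofReal_ofNat]
  exact ENNReal.ofReal_le_ofReal (Real.sqrt_le_iff.2 ⟨by norm_num, by linarith [Real.pi_le_four]⟩)

lemma log_div_stdNormalPDF_le {p : ℝ} (hp : 0 ≤ p) (x : ℝ) :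
    Real.log (p / stdNormalPDF x) ≤ 2 + x ^ 2 / 2 + 2 * √p := by
  rcases hp.eq_or_lt with rfl | hp_pos
  · simp only [zero_div, Real.log_zero, Real.sqrt_zero]
    positivity
  have hlog_sqrt_pi : Real.log √(2 * Real.pi) ≤ 2 := by
    have hsqrt : √(2 * Real.pi) ≤ 3 :=
      Real.sqrt_le_iff.2 ⟨by norm_num, by linarith [Real.pi_lt_four]⟩
    linarith [Real.log_le_sub_one_of_pos (by positivity : 0 < √(2 * Real.pi))]
  have hlog_p : Real.log p ≤ 2 * √p := by
    linarith [Real.log_sqrt hp, Real.log_le_sub_one_of_pos (Real.sqrt_pos.2 hp_pos)]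
  rw [Real.log_div hp_pos.ne' (stdNormalPDF_pos x).ne', stdNormalPDF,
    Real.log_mul (by positivity) (by positivity), Real.log_inv, Real.log_exp]
  linarith

lemma two_add_sq_div_two_le (x : ℝ) :
    2 + x ^ 2 / 2 ≤ 3 * (1 + |x| ^ 3) * √(1 + x ^ 2)⁻¹ := by
  have hsqrt : √(1 + x ^ 2) ≤ 1 + |x| :=
    Real.sqrt_le_iff.2 ⟨by positivity, by nlinarith [sq_abs x, abs_nonneg x]⟩
  rw [Real.sqrt_inv, ← div_eq_mul_inv, le_div_iff₀ (by positivity)]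
  calc (2 + x ^ 2 / 2) * √(1 + x ^ 2) ≤ (2 + x ^ 2 / 2) * (1 + |x|) := by gcongr
    _ ≤ 3 * (1 + |x| ^ 3) := by
      rw [← sq_abs x]
      nlinarith [abs_nonneg x, mul_nonneg (abs_nonneg x) (sq_nonneg (|x| - 1)),
        sq_nonneg (|x| - 1), mul_nonneg (abs_nonneg x) (sq_nonneg (|x| - 3 / 4)),
        sq_nonneg (|x| - 3 / 4)]

lemma stdNormalPDF_mul_klFun_div_le {p : ℝ} (hp : 0 ≤ p) (x a : ℝ) :
    stdNormalPDF x * klFun (p / stdNormalPDF x) ≤ stdNormalPDF x * a ^ 2 +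
      (3 * |(p - stdNormalPDF x * (1 + a)) * √(1 + x ^ 2)⁻¹| +
        3 * |x ^ 3 * (p - stdNormalPDF x * (1 + a)) * √(1 + x ^ 2)⁻¹| +
        2 * |(p - stdNormalPDF x * (1 + a)) * √p|) := by
  set u := p - stdNormalPDF x * (1 + a)
  calc stdNormalPDF x * klFun (p / stdNormalPDF x)
      ≤ stdNormalPDF x * a ^ 2 + |u| * (2 + x ^ 2 / 2 + 2 * √p) :=
        mul_klFun_div_le hp (stdNormalPDF_pos x) (by linarith [sq_nonneg x, Real.sqrt_nonneg p])
          (log_div_stdNormalPDF_le hp x)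
    _ ≤ stdNormalPDF x * a ^ 2 + |u| * (3 * (1 + |x| ^ 3) * √(1 + x ^ 2)⁻¹ + 2 * √p) := by
        gcongr
        exact two_add_sq_div_two_le x
    _ = _ := by
        simp only [abs_mul, abs_pow, abs_of_nonneg (Real.sqrt_nonneg _)]
        ring

lemma ofReal_stdNormalPDF_mul_klFun_div_le {p : ℝ} (hp : 0 ≤ p) (x a : ℝ) :
    ENNReal.ofReal (stdNormalPDF x * klFun (p / stdNormalPDF x)) ≤
      ENNReal.ofReal (stdNormalPDF x * a ^ 2) +
      (3 * ‖(p - stdNormalPDF x * (1 + a)) * √(1 + x ^ 2)⁻¹‖ₑ +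
        3 * ‖x ^ 3 * (p - stdNormalPDF x * (1 + a)) * √(1 + x ^ 2)⁻¹‖ₑ +
        2 * ‖(p - stdNormalPDF x * (1 + a)) * √p‖ₑ) := by
  have hφ := (stdNormalPDF_pos x).le
  refine (ENNReal.ofReal_le_ofReal (stdNormalPDF_mul_klFun_div_le hp x a)).trans_eq ?_
  rw [ENNReal.ofReal_add (by positivity) (by positivity),
    ENNReal.ofReal_add (by positivity) (by positivity),
    ENNReal.ofReal_add (by positivity) (by positivity)]
  simp only [ENNReal.ofReal_mul zero_le_two, ENNReal.ofReal_mul zero_le_three,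
    ENNReal.ofReal_ofNat, Real.enorm_eq_ofReal_abs]

lemma IsProbDensity.integrable {p : ℝ → ℝ} (hp : IsProbDensity p) : Integrable p :=
  .of_integral_ne_zero (hp.2.2 ▸ one_ne_zero)

lemma lintegral_stdNormalPDF_mul_klFun_div_le {p a : ℝ → ℝ} (hp : IsProbDensity p)
    (ha : Measurable a) :
    ∫⁻ x, ENNReal.ofReal (stdNormalPDF x * klFun (p x / stdNormalPDF x)) ≤
      (∫⁻ x, ENNReal.ofReal (stdNormalPDF x * a x ^ 2)) +
      (8 * eLpNorm (fun x ↦ p x - stdNormalPDF x * (1 + a x)) 2 volume +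
        6 * eLpNorm (fun x ↦ x ^ 3 * (p x - stdNormalPDF x * (1 + a x))) 2 volume) := by
  have hp_int := hp.integrable
  obtain ⟨hp_meas, hp_nonneg, hp_mass⟩ := hp
  have hφ := measurable_stdNormalPDF
  set u : ℝ → ℝ := fun x ↦ p x - stdNormalPDF x * (1 + a x)
  set w : ℝ → ℝ := fun x ↦ √(1 + x ^ 2)⁻¹
  have hu_meas : Measurable u := by fun_prop
  have hw_meas : Measurable w := by fun_prop
  have hsqrt_norm : eLpNorm (fun x ↦ √(p x)) 2 volume = 1 := by
    simp [eLpNorm_two_sqrt hp_int hp_nonneg, hp_mass]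
  have huw : ∫⁻ x, ‖u x * w x‖ₑ ≤ eLpNorm u 2 volume * 2 :=
    (lintegral_enorm_mul_le_eLpNorm_two hu_meas.aestronglyMeasurable
      hw_meas.aestronglyMeasurable).trans (by gcongr; exact eLpNorm_two_sqrt_inv_one_add_sq_le)
  have hxuw : ∫⁻ x, ‖x ^ 3 * u x * w x‖ₑ ≤ eLpNorm (fun x ↦ x ^ 3 * u x) 2 volume * 2 :=
    (lintegral_enorm_mul_le_eLpNorm_two (by fun_prop) hw_meas.aestronglyMeasurable).trans
      (by gcongr; exact eLpNorm_two_sqrt_inv_one_add_sq_le)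
  have husqrt : ∫⁻ x, ‖u x * √(p x)‖ₑ ≤ eLpNorm u 2 volume := by
    simpa only [hsqrt_norm, mul_one] using lintegral_enorm_mul_le_eLpNorm_two (μ := volume)
      hu_meas.aestronglyMeasurable hp_meas.sqrt.aestronglyMeasurable
  calc ∫⁻ x, ENNReal.ofReal (stdNormalPDF x * klFun (p x / stdNormalPDF x))
      ≤ ∫⁻ x, (ENNReal.ofReal (stdNormalPDF x * a x ^ 2) + (3 * ‖u x * w x‖ₑ +
          3 * ‖x ^ 3 * u x * w x‖ₑ + 2 * ‖u x * √(p x)‖ₑ)) :=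
        lintegral_mono fun x ↦ ofReal_stdNormalPDF_mul_klFun_div_le (hp_nonneg x) x (a x)
    _ = (∫⁻ x, ENNReal.ofReal (stdNormalPDF x * a x ^ 2)) + (3 * ∫⁻ x, ‖u x * w x‖ₑ) +
          (3 * ∫⁻ x, ‖x ^ 3 * u x * w x‖ₑ) + 2 * ∫⁻ x, ‖u x * √(p x)‖ₑ := by
        rw [lintegral_add_left (by fun_prop), lintegral_add_left (by fun_prop),
          lintegral_add_left (by fun_prop), lintegral_const_mul _ (by fun_prop),
          lintegral_const_mul _ (by fun_prop), lintegral_const_mul _ (by fun_prop)]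
        ring
    _ ≤ (∫⁻ x, ENNReal.ofReal (stdNormalPDF x * a x ^ 2)) + 3 * (eLpNorm u 2 volume * 2) +
          3 * (eLpNorm (fun x ↦ x ^ 3 * u x) 2 volume * 2) + 2 * eLpNorm u 2 volume := by
        gcongr
    _ = _ := by ring

end WeightedBound

section Edgeworth

open Polynomial ProbabilityTheory InformationTheory

lemma integrable_pow_mul_of_le {q : ℝ → ℝ} {k n : ℕ} (hk : k ≤ n) (hq : Integrable q)
    (hmom : Integrable fun x ↦ |x| ^ n * q x) : Integrable fun x ↦ x ^ k * q x := by
  refine (hq.norm.add hmom.norm).mono' (by fun_prop) (.of_forall fun x ↦ ?_)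
  have hpow : |x| ^ k ≤ 1 + |x| ^ n := by
    rcases le_total |x| 1 with hx | hx
    · linarith [pow_le_one₀ (abs_nonneg x) hx (n := k), pow_nonneg (abs_nonneg x) n]
    · linarith [pow_le_pow_right₀ hx hk]
  calc ‖x ^ k * q x‖ = |x| ^ k * ‖q x‖ := by rw [norm_mul, norm_pow, Real.norm_eq_abs]
    _ ≤ (1 + |x| ^ n) * ‖q x‖ := by gcongr
    _ = ‖q x‖ + ‖|x| ^ n * q x‖ := by
      rw [norm_mul, norm_pow, Real.norm_eq_abs |x|, abs_abs]
      ring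

lemma eLpNorm_iteratedDeriv_charFn_sub_gAlpha {p : ℝ → ℝ} {n : ℕ} (hp : Integrable p)
    (hmom : Integrable fun x ↦ |x| ^ n * p x) (α : ℝ) :
    eLpNorm (fun t ↦ iteratedDeriv n (charFn p) t - iteratedDeriv n (gAlpha α) t) 2 volume =
      ENNReal.ofReal √(2 * Real.pi) *
        eLpNorm (fun x ↦ x ^ n * (p x - edgeworthPDF α x)) 2 volume := by
  rw [← charFn_edgeworthPDF]
  exact eLpNorm_iteratedDeriv_charFn_sub (fun k hk ↦ integrable_pow_mul_of_le hk hp hmom)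
    fun k _ ↦ integrable_pow_mul_edgeworthPDF α k

lemma klDiv_gaussianReal_le_eLpNorm_sub_edgeworthPDF {p : ℝ → ℝ} (hp : IsProbDensity p) (α : ℝ) :
    klDiv (volume.withDensity fun x ↦ ENNReal.ofReal (p x)) (gaussianReal 0 1) ≤
      ENNReal.ofReal (α ^ 2 / 6) +
        (8 * eLpNorm (fun x ↦ p x - edgeworthPDF α x) 2 volume +
          6 * eLpNorm (fun x ↦ x ^ 3 * (p x - edgeworthPDF α x)) 2 volume) := by
  have hvariance : ∫⁻ x, ENNReal.ofReal (stdNormalPDF x * (α / 6 * (realHermite 3).eval x) ^ 2) =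
      ENNReal.ofReal (α ^ 2 / 6) := by
    rw [lintegral_stdNormalPDF_mul_realHermite_sq]
    norm_num [Nat.factorial]
    ring_nf
  rw [gaussianReal_eq_withDensity_stdNormalPDF, klDiv_withDensity_ofReal hp.integrable
    integrable_stdNormalPDF hp.1 measurable_stdNormalPDF hp.2.1 stdNormalPDF_pos, ← hvariance]
  exact lintegral_stdNormalPDF_mul_klFun_div_le hp (by fun_prop)

lemma ofReal_integral_mul_log_div_stdNormalPDF_le_klDiv {p : ℝ → ℝ} (hp : IsProbDensity p) :
    ENNReal.ofReal (∫ x, p x * Real.log (p x / stdNormalPDF x)) ≤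
      klDiv (volume.withDensity fun x ↦ ENNReal.ofReal (p x)) (gaussianReal 0 1) := by
  rw [gaussianReal_eq_withDensity_stdNormalPDF]
  exact ofReal_integral_mul_log_div_le_klDiv hp.integrable integrable_stdNormalPDF hp.1
    measurable_stdNormalPDF hp.2.1 stdNormalPDF_pos (hp.2.2.trans integral_stdNormalPDF.symm)

theorem relative_entropy_edgeworth_bound_general (p : ℝ → ℝ) (hp : IsProbDensity p)
    (hmom : Integrable fun x ↦ |x| ^ 3 * p x) (α : ℝ) :
    klDiv (volume.withDensity fun x ↦ ENNReal.ofReal (p x)) (gaussianReal 0 1) ≤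
      ENNReal.ofReal (α ^ 2 / 6) +
        4 * (eLpNorm (fun t ↦ charFn p t - gAlpha α t) 2 volume +
          eLpNorm (fun t ↦ iteratedDeriv 3 (charFn p) t - iteratedDeriv 3 (gAlpha α) t)
            2 volume) := by
  have hplancherel : eLpNorm (fun t ↦ charFn p t - gAlpha α t) 2 volume =
      ENNReal.ofReal √(2 * Real.pi) * eLpNorm (fun x ↦ p x - edgeworthPDF α x) 2 volume := by
    simpa using eLpNorm_iteratedDeriv_charFn_sub_gAlpha (n := 0) hp.integrable
      (by simpa using hp.integrable) α
  have htwo_le : 2 ≤ ENNReal.ofReal √(2 * Real.pi) := by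
    rw [← ENNReal.ofReal_ofNat]
    exact ENNReal.ofReal_le_ofReal (Real.le_sqrt_of_sq_le (by linarith [Real.pi_gt_three]))
  rw [hplancherel, eLpNorm_iteratedDeriv_charFn_sub_gAlpha hp.integrable hmom, ← mul_add,
    ← mul_assoc]
  refine (klDiv_gaussianReal_le_eLpNorm_sub_edgeworthPDF hp α).trans ?_
  gcongr
  calc _ ≤ 4 * 2 * (eLpNorm (fun x ↦ p x - edgeworthPDF α x) 2 volume +
        eLpNorm (fun x ↦ x ^ 3 * (p x - edgeworthPDF α x)) 2 volume) := by
        rw [mul_add]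
        gcongr <;> norm_num
    _ ≤ _ := by gcongr

end Edgeworth

/-- Proposition 3.1: let `X` be a random variable with `E|X|³ < ∞`, density `p`,
characteristic function `f`, and let `Z` be standard normal. Then for every real `α`,
`D(X‖Z) ≤ α² + 4(‖f - g_α‖₂ + ‖f''' - g_α'''‖₂)`, the inequality being stated in
`[0,∞]` (via `eLpNorm`) so that it trivially holds when the right-hand side is
infinite. -/
theorem relative_entropy_edgeworth_bound (p : ℝ → ℝ)
    (hp : IsProbDensity p)
    (hmom : Integrable (fun x => |x| ^ 3 * p x) volume) :
    ∀ α : ℝ,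
      ENNReal.ofReal (∫ x, p x * Real.log (p x / stdNormalPDF x)) ≤
        ENNReal.ofReal (α ^ 2) +
        4 * (eLpNorm (fun t => charFn p t - gAlpha α t) 2 volume +
             eLpNorm (fun t => iteratedDeriv 3 (charFn p) t - iteratedDeriv 3 (gAlpha α) t)
               2 volume) := by
  intro α
  refine ((ofReal_integral_mul_log_div_stdNormalPDF_le_klDiv hp).trans
    (relative_entropy_edgeworth_bound_general p hp hmom α)).trans ?_
  gcongr
  linarith [sq_nonneg α]
end

section
/- There is an absolute constant c > 0 with the following property. Let X be a random variable with finite variance σ² > 0 having an absolutely continuous distribution with density p satisfying p(x) ≤ M almost everywhere, and let f(t) = E e^{itX} be its characteristic function. Then for all real t, |f(t)| ≤ 1 − c·min{1, σ²t²}/(M²σ²). -/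
open MeasureTheory

/-!
Rotating by the argument of `f t` gives `1 - ‖f t‖ = E (1 - cos (t X - θ))`. The integrand is at
least `8 δ ^ 2` unless `(t X - θ) / 2π` is within `δ` of an integer. In the window
`|x - a| < 2σ`, which carries mass at least `3 / 4` by Chebyshev's inequality, such `x` form a set
of length `O((σ + 1 / |t|) δ)`, hence of mass at most `1 / 4` when `δ` is a small multiple of
`1 / (M (σ + 1 / |t|))`. So `1 - ‖f t‖` is at least `4 δ ^ 2`.
-/

open ProbabilityTheory Metric Set
open scoped NNReal ENNReal RealInnerProductSpace

section Round

variable {K : Type*} [Field K] [LinearOrder K] [IsStrictOrderedRing K] [FloorRing K] {b c : K}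

lemma round_le_round (h : b ≤ c) : round b ≤ round c := by
  simp only [round_eq]
  gcongr

lemma card_Icc_round_le (h : b ≤ c) :
    ((Finset.Icc (round b) (round c)).card : K) ≤ c - b + 2 := by
  have h_card : ((Finset.Icc (round b) (round c)).card : ℤ) = round c + 1 - round b := by
    rw [Int.card_Icc, Int.toNat_of_nonneg]
    linarith [round_le_round h]
  have h_card' : ((Finset.Icc (round b) (round c)).card : K) = round c + 1 - round b := by
    exact_mod_cast h_card
  linarith [(abs_le.mp (abs_sub_round b)).2, (abs_le.mp (abs_sub_round c)).1]

end Round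

section NearInteger

variable {a b c r α β δ : ℝ}

lemma cos_two_pi_mul_le (u : ℝ) :
    Real.cos (2 * Real.pi * u) ≤ 1 - 8 * |u - round u| ^ 2 := by
  have hπ := Real.pi_pos
  have h_abs : |2 * Real.pi * (u - round u)| ≤ Real.pi := by
    rw [abs_mul, abs_of_pos (by positivity)]
    nlinarith [abs_sub_round u]
  calc Real.cos (2 * Real.pi * u)
      = Real.cos (2 * Real.pi * (u - round u)) := by
        rw [mul_sub, mul_comm _ (round u : ℝ), Real.cos_sub_int_mul_two_pi]
    _ ≤ 1 - 2 / Real.pi ^ 2 * (2 * Real.pi * (u - round u)) ^ 2 :=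
        Real.cos_le_one_sub_mul_cos_sq h_abs
    _ = 1 - 8 * |u - round u| ^ 2 := by
        rw [sq_abs]
        field_simp
        ring

lemma volume_Icc_inter_near_int_le (h : b ≤ c) :
    volume (Icc b c ∩ {u : ℝ | |u - round u| < δ}) ≤
      ENNReal.ofReal ((c - b + 2) * (2 * δ)) := by
  have h_cover : Icc b c ∩ {u : ℝ | |u - round u| < δ} ⊆
      ⋃ k ∈ Finset.Icc (round b) (round c), ball (k : ℝ) δ := fun u ⟨⟨hbu, huc⟩, hu⟩ ↦
    mem_biUnion (Finset.mem_coe.mpr <|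
      Finset.mem_Icc.mpr ⟨round_le_round hbu, round_le_round huc⟩) hu
  calc volume (Icc b c ∩ {u : ℝ | |u - round u| < δ})
      ≤ ∑ k ∈ Finset.Icc (round b) (round c), volume (ball (k : ℝ) δ) :=
        (measure_mono h_cover).trans (measure_biUnion_finset_le _ _)
    _ = ENNReal.ofReal (Finset.Icc (round b) (round c)).card * ENNReal.ofReal (2 * δ) := by
        simp only [Real.volume_ball, Finset.sum_const, nsmul_eq_mul, ENNReal.ofReal_natCast]
    _ ≤ ENNReal.ofReal (c - b + 2) * ENNReal.ofReal (2 * δ) := by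
        gcongr
        exact card_Icc_round_le h
    _ = ENNReal.ofReal ((c - b + 2) * (2 * δ)) :=
        (ENNReal.ofReal_mul (by linarith)).symm

lemma volume_ball_inter_affine_near_int_le (hα : α ≠ 0) (hr : 0 ≤ r) :
    volume (ball a r ∩ {x : ℝ | |α * x + β - round (α * x + β)| < δ}) ≤
      ENNReal.ofReal (4 * (r + 1 / |α|) * δ) := by
  have hα' : 0 < |α| := abs_pos.mpr hα
  set y := α * a + β
  have h_subset : ball a r ∩ {x : ℝ | |α * x + β - round (α * x + β)| < δ} ⊆
      (α * ·) ⁻¹' ((· + β) ⁻¹'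
        (Icc (y - |α| * r) (y + |α| * r) ∩ {u : ℝ | |u - round u| < δ})) := by
    rintro x ⟨hx, hx_near⟩
    refine ⟨?_, hx_near⟩
    rw [← Real.closedBall_eq_Icc, mem_closedBall, Real.dist_eq, add_sub_add_right_eq_sub,
      ← mul_sub, abs_mul]
    gcongr
    exact (mem_ball.mp hx).le
  calc _ ≤ ENNReal.ofReal |α⁻¹| *
        volume (Icc (y - |α| * r) (y + |α| * r) ∩ {u : ℝ | |u - round u| < δ}) := by
        grw [h_subset, Real.volume_preimage_mul_left hα, measure_preimage_add_right]
    _ ≤ ENNReal.ofReal |α⁻¹| *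
        ENNReal.ofReal ((y + |α| * r - (y - |α| * r) + 2) * (2 * δ)) := by
        gcongr
        exact volume_Icc_inter_near_int_le (by linarith [mul_nonneg hα'.le hr])
    _ = ENNReal.ofReal (4 * (r + 1 / |α|) * δ) := by
        rw [← ENNReal.ofReal_mul (abs_nonneg _), abs_inv]
        congr 1
        field_simp
        ring

lemma measureReal_affine_near_int_le {μ : Measure ℝ} [IsFiniteMeasure μ] {M : ℝ≥0}
    (hμ : μ ≤ M • volume) (hα : α ≠ 0) (hr : 0 ≤ r) (hδ : 0 ≤ δ) :
    μ.real {x : ℝ | |α * x + β - round (α * x + β)| < δ} ≤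
      μ.real (ball a r)ᶜ + M * (4 * (r + 1 / |α|) * δ) := by
  set near := {x : ℝ | |α * x + β - round (α * x + β)| < δ}
  have h_window : μ.real (ball a r ∩ near) ≤ M * (4 * (r + 1 / |α|) * δ) := by
    refine ENNReal.toReal_le_of_le_ofReal (by positivity) ?_
    calc μ (ball a r ∩ near) ≤ M * volume (ball a r ∩ near) := hμ _
      _ ≤ M * ENNReal.ofReal (4 * (r + 1 / |α|) * δ) := by
          gcongr
          exact volume_ball_inter_affine_near_int_le hα hr
      _ = ENNReal.ofReal (M * (4 * (r + 1 / |α|) * δ)) := by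
          rw [ENNReal.ofReal_mul M.coe_nonneg, ENNReal.ofReal_coe_nnreal]
  calc μ.real near ≤ μ.real ((ball a r)ᶜ ∪ ball a r ∩ near) :=
        measureReal_mono fun x hx ↦ (em (x ∈ ball a r)).symm.imp_right fun h ↦ ⟨h, hx⟩
    _ ≤ μ.real (ball a r)ᶜ + μ.real (ball a r ∩ near) := measureReal_union_le _ _
    _ ≤ μ.real (ball a r)ᶜ + M * (4 * (r + 1 / |α|) * δ) := by gcongr

end NearInteger

section CharFun

variable {E : Type*} [NormedAddCommGroup E] [InnerProductSpace ℝ E] [MeasurableSpace E]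
  [OpensMeasurableSpace E]

lemma exists_norm_charFun_eq_integral_cos (μ : Measure E) [IsFiniteMeasure μ] (t : E) :
    ∃ θ : ℝ, ‖charFun μ t‖ = ∫ x, Real.cos (⟪x, t⟫ - θ) ∂μ := by
  set θ := (charFun μ t).arg
  have h_rotate : (‖charFun μ t‖ : ℂ) = ∫ x, Complex.exp ((⟪x, t⟫ - θ : ℝ) * Complex.I) ∂μ := by
    calc (‖charFun μ t‖ : ℂ)
        = ‖charFun μ t‖ * Complex.exp (θ * Complex.I) * Complex.exp (-(θ * Complex.I)) := by
          rw [mul_assoc, ← Complex.exp_add, add_neg_cancel, Complex.exp_zero, mul_one]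
      _ = ∫ x, Complex.exp ((⟪x, t⟫ - θ : ℝ) * Complex.I) ∂μ := by
          rw [Complex.norm_mul_exp_arg_mul_I, charFun_apply, ← integral_mul_const]
          simp only [← Complex.exp_add, ← sub_eq_add_neg, ← sub_mul, Complex.ofReal_sub]
  have h_integrable : Integrable (fun x ↦ Complex.exp ((⟪x, t⟫ - θ : ℝ) * Complex.I)) μ := by
    refine .of_bound (Measurable.aestronglyMeasurable ?_) 1 (.of_forall fun x ↦ ?_)
    · fun_prop
    · rw [Complex.norm_exp_ofReal_mul_I]
  refine ⟨θ, ?_⟩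
  calc ‖charFun μ t‖ = (∫ x, Complex.exp ((⟪x, t⟫ - θ : ℝ) * Complex.I) ∂μ).re := by
        rw [← h_rotate, Complex.ofReal_re]
    _ = ∫ x, (Complex.exp ((⟪x, t⟫ - θ : ℝ) * Complex.I)).re ∂μ := (integral_re h_integrable).symm
    _ = ∫ x, Real.cos (⟪x, t⟫ - θ) ∂μ := by simp only [Complex.exp_ofReal_mul_I_re]

lemma exists_norm_charFun_le_one_sub_near_int (μ : Measure E) [IsProbabilityMeasure μ] (t : E)
    {δ : ℝ} (hδ : 0 ≤ δ) :
    ∃ β : ℝ, ‖charFun μ t‖ ≤ 1 - 8 * δ ^ 2 * (1 - μ.real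
      {x | |⟪x, t⟫ / (2 * Real.pi) + β - round (⟪x, t⟫ / (2 * Real.pi) + β)| < δ}) := by
  obtain ⟨θ, hθ⟩ := exists_norm_charFun_eq_integral_cos μ t
  refine ⟨-θ / (2 * Real.pi), ?_⟩
  set u : E → ℝ := fun x ↦ ⟪x, t⟫ / (2 * Real.pi) + -θ / (2 * Real.pi)
  have h_cos (x : E) : Real.cos (⟪x, t⟫ - θ) ≤ 1 - 8 * |u x - round (u x)| ^ 2 := by
    convert cos_two_pi_mul_le (u x) using 2
    simp only [u]
    field_simp
    ring
  have h_integrable : Integrable (fun x ↦ Real.cos (⟪x, t⟫ - θ)) μ :=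
    .of_bound (by fun_prop) 1 (.of_forall fun x ↦ Real.abs_cos_le_one _)
  have h_markov : 8 * δ ^ 2 * μ.real {x | 8 * δ ^ 2 ≤ 1 - Real.cos (⟪x, t⟫ - θ)} ≤
      ∫ x, (1 - Real.cos (⟪x, t⟫ - θ)) ∂μ :=
    mul_meas_ge_le_integral_of_nonneg
      (.of_forall fun x ↦ sub_nonneg.mpr (Real.cos_le_one _))
      ((integrable_const 1).sub h_integrable) _
  have h_cover : univ ⊆ {x | 8 * δ ^ 2 ≤ 1 - Real.cos (⟪x, t⟫ - θ)} ∪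
      {x | |u x - round (u x)| < δ} := by
    refine fun x _ ↦ (lt_or_ge |u x - round (u x)| δ).symm.imp_left fun h_far ↦ ?_
    have h_far_sq : δ ^ 2 ≤ |u x - round (u x)| ^ 2 := by gcongr
    rw [mem_ofPred_eq]
    linarith [h_cos x]
  have h_mass : 1 - μ.real {x | |u x - round (u x)| < δ} ≤
      μ.real {x | 8 * δ ^ 2 ≤ 1 - Real.cos (⟪x, t⟫ - θ)} := by
    rw [sub_le_iff_le_add]
    exact probReal_univ.symm.trans_le <|
      (measureReal_mono h_cover).trans (measureReal_union_le _ _)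
  rw [integral_sub (integrable_const 1) h_integrable, ← hθ, integral_const, probReal_univ,
    one_smul] at h_markov
  grw [h_mass]
  linarith

variable {μ : Measure ℝ} [IsProbabilityMeasure μ] {M : ℝ≥0} {a r σ t : ℝ}

lemma norm_charFun_le_of_measureReal_compl_ball_le (hμ : μ ≤ M • volume) (hr : 0 ≤ r)
    (h_tail : μ.real (ball a r)ᶜ ≤ 1 / 4) (ht : t ≠ 0) :
    ‖charFun μ t‖ ≤ 1 - 1 / (64 * M ^ 2 * (r + 2 * Real.pi / |t|) ^ 2) := by
  set L := r + 2 * Real.pi / |t|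
  have hL : 0 ≤ L := by positivity
  set δ := (16 * M * L)⁻¹
  have hδ : 0 ≤ δ := inv_nonneg.mpr (mul_nonneg (by positivity) hL)
  obtain ⟨β, hβ⟩ := exists_norm_charFun_le_one_sub_near_int μ t hδ
  simp only [RCLike.inner_apply, conj_trivial, mul_div_right_comm] at hβ
  set α := t / (2 * Real.pi)
  have hα : α ≠ 0 := div_ne_zero ht (by positivity)
  have hα_inv : 1 / |α| = 2 * Real.pi / |t| := by
    rw [abs_div, abs_of_pos (by positivity : 0 < 2 * Real.pi), one_div_div]
  have h_near : μ.real {x | |α * x + β - round (α * x + β)| < δ} ≤ 1 / 2 := by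
    calc μ.real {x | |α * x + β - round (α * x + β)| < δ}
        ≤ μ.real (ball a r)ᶜ + M * (4 * (r + 1 / |α|) * δ) :=
          measureReal_affine_near_int_le hμ hα hr hδ
      _ = μ.real (ball a r)ᶜ + 1 / 4 * (16 * M * L * δ) := by
          rw [hα_inv]
          ring
      _ ≤ 1 / 4 + 1 / 4 * 1 := by
          gcongr
          exact mul_inv_le_one
      _ = 1 / 2 := by norm_num
  calc ‖charFun μ t‖ ≤ 1 - 8 * δ ^ 2 * (1 - 1 / 2) := by grw [hβ, h_near]
    _ = 1 - 1 / (64 * M ^ 2 * L ^ 2) := by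
        simp only [δ, mul_inv, mul_pow, inv_pow, one_div]
        ring

lemma norm_charFun_le_of_variance_le (hμ : μ ≤ M • volume) (h_memLp : MemLp id 2 μ)
    (hσ : 0 < σ) (h_var : Var[id; μ] ≤ σ ^ 2) (ht : t ≠ 0) :
    ‖charFun μ t‖ ≤ 1 - 1 / (256 * M ^ 2 * (σ + Real.pi / |t|) ^ 2) := by
  have h_chebyshev : μ.real (ball μ[id] (2 * σ))ᶜ ≤ 1 / 4 := by
    have h_compl : (ball μ[id] (2 * σ))ᶜ = {x | 2 * σ ≤ |id x - μ[id]|} := by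
      ext x
      simp only [mem_compl_iff, mem_ball, not_lt, Real.dist_eq, id_eq, mem_ofPred_eq]
    have h_ratio : Var[id; μ] / (2 * σ) ^ 2 ≤ 1 / 4 := by
      rw [div_le_iff₀ (by positivity)]
      linarith
    rw [h_compl]
    exact ENNReal.toReal_le_of_le_ofReal (by norm_num) <|
      (meas_ge_le_variance_div_sq h_memLp (by positivity)).trans (ENNReal.ofReal_le_ofReal h_ratio)
  have h_bound := norm_charFun_le_of_measureReal_compl_ball_le hμ (by positivity) h_chebyshev ht
  have h_scale : 64 * M ^ 2 * (2 * σ + 2 * Real.pi / |t|) ^ 2 =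
      256 * M ^ 2 * (σ + Real.pi / |t|) ^ 2 := by ring
  rwa [h_scale] at h_bound

end CharFun

/-- The law of a random variable with density `p`, through which statements about `p` and `charFn`
become statements about Mathlib's `charFun` and `variance`. Negative values of `p` are truncated
to `0`. -/
noncomputable def densityMeasure (p : ℝ → ℝ) : Measure ℝ :=
  volume.withDensity fun x ↦ ENNReal.ofReal (p x)

lemma densityMeasure_le {p : ℝ → ℝ} {M : ℝ≥0} (hM : ∀ᵐ x, p x ≤ M) :
    densityMeasure p ≤ M • volume := by
  calc densityMeasure p ≤ volume.withDensity fun _ ↦ (M : ℝ≥0∞) :=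
        withDensity_mono (hM.mono fun x hx ↦ ENNReal.ofReal_le_coe.mpr hx)
    _ = M • volume := withDensity_const _

namespace IsProbDensity

variable {p : ℝ → ℝ} {a : ℝ}

lemma isProbabilityMeasure_densityMeasure (hp : IsProbDensity p) :
    IsProbabilityMeasure (densityMeasure p) := by
  obtain ⟨-, hp_nonneg, hp_integral⟩ := hp
  refine ⟨?_⟩
  rw [densityMeasure, withDensity_apply _ .univ, setLIntegral_univ,
    ← ofReal_integral_eq_lintegral_ofReal (.of_integral_ne_zero (by simp [hp_integral]))
    (.of_forall hp_nonneg), hp_integral, ENNReal.ofReal_one]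

lemma integral_densityMeasure {E : Type*} [NormedAddCommGroup E] [NormedSpace ℝ E]
    (hp : IsProbDensity p) (g : ℝ → E) :
    ∫ x, g x ∂(densityMeasure p) = ∫ x, p x • g x := by
  rw [densityMeasure, integral_withDensity_eq_integral_toReal_smul hp.1.ennreal_ofReal
    (.of_forall fun _ ↦ ENNReal.ofReal_lt_top)]
  simp only [ENNReal.toReal_ofReal (hp.2.1 _)]

lemma charFun_densityMeasure (hp : IsProbDensity p) (t : ℝ) :
    charFun (densityMeasure p) t = charFn p t := by
  rw [charFun_apply_real, hp.integral_densityMeasure, charFn]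
  congr 1 with x
  rw [Complex.real_smul, mul_comm, mul_comm Complex.I, mul_right_comm]

lemma integral_sub_sq_densityMeasure (hp : IsProbDensity p) :
    ∫ x, (x - a) ^ 2 ∂(densityMeasure p) = ∫ x, (x - a) ^ 2 * p x := by
  simp only [hp.integral_densityMeasure, smul_eq_mul, mul_comm]

lemma memLp_id_densityMeasure (hp : IsProbDensity p) (h : ∫ x, (x - a) ^ 2 * p x ≠ 0) :
    MemLp id 2 (densityMeasure p) := by
  have := hp.isProbabilityMeasure_densityMeasure
  have h_sub : MemLp (fun x ↦ x - a) 2 (densityMeasure p) :=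
    (memLp_two_iff_integrable_sq (by fun_prop)).mpr <|
      .of_integral_ne_zero (hp.integral_sub_sq_densityMeasure.trans_ne h)
  convert h_sub.add (memLp_const a) using 1
  ext x
  simp

lemma variance_id_densityMeasure (hp : IsProbDensity p) (ha : ∫ x, x * p x = a) :
    Var[id; densityMeasure p] = ∫ x, (x - a) ^ 2 * p x := by
  have h_mean : (densityMeasure p)[id] = a := by
    simp only [hp.integral_densityMeasure, id_eq, smul_eq_mul, mul_comm (p _), ha]
  rw [variance_eq_integral measurable_id.aemeasurable, h_mean]
  exact hp.integral_sub_sq_densityMeasure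

end IsProbDensity

lemma min_one_sq_mul_sq_div_sq_le {C σ t : ℝ} (hC : 0 ≤ C) (hσ : 0 < σ) (ht : t ≠ 0) :
    min 1 (σ ^ 2 * t ^ 2) / σ ^ 2 ≤ (1 + C) ^ 2 / (σ + C / |t|) ^ 2 := by
  have h_min : min 1 (σ ^ 2 * t ^ 2) = min 1 (σ * |t|) ^ 2 := by
    rw [← sq_abs t, ← mul_pow]
    rcases le_total 1 (σ * |t|) with h | h
    · rw [min_eq_left h, min_eq_left (one_le_pow₀ h), one_pow]
    · rw [min_eq_right h, min_eq_right (pow_le_one₀ (by positivity) h)]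
  have h_linear : min 1 (σ * |t|) / σ * (σ + C / |t|) ≤ 1 + C := by
    calc min 1 (σ * |t|) / σ * (σ + C / |t|)
        = min 1 (σ * |t|) + min 1 (σ * |t|) * (C / (σ * |t|)) := by field_simp
      _ ≤ 1 + σ * |t| * (C / (σ * |t|)) := by
          gcongr
          · exact min_le_left _ _
          · exact min_le_right _ _
      _ = 1 + C := by field_simp
  rw [h_min, ← div_pow, ← div_pow]
  exact pow_le_pow_left₀ (by positivity) ((le_div_iff₀ (by positivity)).mpr h_linear) 2

/-- Proposition 6.1 (Statulevičius): there is an absolute constant `c > 0` such that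
for any random variable `X` with finite variance `σ² > 0` and an absolutely continuous
distribution with density `p ≤ M` a.e., the characteristic function `f` of `X` satisfies
`|f(t)| ≤ 1 - c·min{1, σ²t²}/(M²σ²)` for all real `t`. -/
theorem charFn_bound_of_bounded_density :
    ∃ c : ℝ, 0 < c ∧
      ∀ (p : ℝ → ℝ) (M a σ : ℝ),
        IsProbDensity p →
        (∀ᵐ x ∂(volume : Measure ℝ), p x ≤ M) →
        (∫ x, x * p x = a) →
        0 < σ →
        (∫ x, (x - a) ^ 2 * p x = σ ^ 2) →
        ∀ t : ℝ, ‖charFn p t‖ ≤ 1 - c * min 1 (σ ^ 2 * t ^ 2) / (M ^ 2 * σ ^ 2) := by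
  refine ⟨1 / (256 * (1 + Real.pi) ^ 2), by positivity, ?_⟩
  intro p M a σ hp hM ha hσ hvar t
  have := hp.isProbabilityMeasure_densityMeasure
  obtain ⟨x, hx⟩ := hM.exists
  lift M to ℝ≥0 using (hp.2.1 x).trans hx
  rw [← hp.charFun_densityMeasure]
  rcases eq_or_ne t 0 with rfl | ht
  · simp
  have h_charFun : ‖charFun (densityMeasure p) t‖ ≤
      1 - 1 / (256 * M ^ 2 * (σ + Real.pi / |t|) ^ 2) :=
    norm_charFun_le_of_variance_le (densityMeasure_le hM)
      (hp.memLp_id_densityMeasure (hvar.trans_ne (by positivity))) hσ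
      ((hp.variance_id_densityMeasure ha).trans hvar).le ht
  have h_min := min_one_sq_mul_sq_div_sq_le Real.pi_pos.le hσ ht
  calc ‖charFun (densityMeasure p) t‖
      ≤ 1 - 1 / (256 * M ^ 2 * (σ + Real.pi / |t|) ^ 2) := h_charFun
    _ = 1 - 1 / (256 * (1 + Real.pi) ^ 2) / M ^ 2 *
          ((1 + Real.pi) ^ 2 / (σ + Real.pi / |t|) ^ 2) := by field_simp
    _ ≤ 1 - 1 / (256 * (1 + Real.pi) ^ 2) / M ^ 2 * (min 1 (σ ^ 2 * t ^ 2) / σ ^ 2) := by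
        grw [h_min]
    _ = 1 - 1 / (256 * (1 + Real.pi) ^ 2) * min 1 (σ ^ 2 * t ^ 2) / (M ^ 2 * σ ^ 2) := by ring
end

section
/- There is an absolute constant c > 0 with the following property. Let X be a random variable with finite variance σ² > 0, having an absolutely continuous distribution with density p and finite entropy, and let f be its characteristic function. Then for all real t, |f(t)| ≤ 1 − c·min{1, σ²t²}·e^{−4·D(X)}. -/
open MeasureTheory

/-- The entropic distance to normality `D(X) = h(Z) - h(X) = log (σ √(2πe)) + ∫ p log p`
for a random variable with density `p` and standard deviation `σ > 0`. -/
noncomputable def entDist (p : ℝ → ℝ) (σ : ℝ) : ℝ :=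
  Real.log (σ * Real.sqrt (2 * Real.pi * Real.exp 1)) + ∫ x, p x * Real.log (p x)

/-!
With `θ` the argument of `f(t)`, the defect is `1 - |f(t)| = 2 E sin² ((tX - θ) / 2)`. Gibbs'
inequality bounds the entropy of `X` by `E V(X) + log ∫ exp (-V)` for any potential `V`. Taking
`V(x) = (x - a)² / (2σ²) + β sin² ((tx - θ) / 2)` with `β` inversely proportional to the defect
keeps `E V(X)` bounded, while `exp (-V)` concentrates around the lattice of zeros of the sine and
has integral of order `(σ + 2π / |t|) / √β`. Hence a small defect forces a small entropy, and the
defect is at least of order `min {1, σ²t²} e^{-2D}`. With `β = 0` the same inequality gives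
`D ≥ 0`, so that `e^{-4D} ≤ e^{-2D}`.
-/

open Real Set

section Gibbs

lemma sub_le_mul_log_sub_log {a b : ℝ} (ha : 0 ≤ a) (hb : 0 < b) :
    a - b ≤ a * (log a - log b) := by
  obtain rfl | ha := ha.eq_or_lt
  · simpa using hb.le
  have hlog := mul_le_mul_of_nonneg_left (log_le_sub_one_of_pos (div_pos hb ha)) ha.le
  rw [log_div hb.ne' ha.ne', mul_sub a (b / a), mul_div_cancel₀ b ha.ne'] at hlog
  linarith

lemma neg_integral_mul_log_le {α : Type*} [MeasurableSpace α] {μ : Measure α} {p V : α → ℝ}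
    (hp_nonneg : 0 ≤ p) (hp_one : ∫ x, p x ∂μ = 1)
    (hp_log : Integrable (fun x => p x * log (p x)) μ)
    (hpV : Integrable (fun x => p x * V x) μ) (hV : Integrable (fun x => exp (-V x)) μ) :
    -∫ x, p x * log (p x) ∂μ ≤ ∫ x, p x * V x ∂μ + log (∫ x, exp (-V x) ∂μ) := by
  have hp : Integrable p μ := integrable_of_integral_eq_one hp_one
  have : NeZero μ := ⟨by rintro rfl; simp at hp_one⟩
  set Z := ∫ x, exp (-V x) ∂μ with hZ
  have hZ_pos : 0 < Z := integral_exp_pos hV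
  have pointwise (x : α) :
      p x - exp (-V x) / Z ≤ p x * log (p x) + (p x * V x + p x * log Z) := by
    have h := sub_le_mul_log_sub_log (hp_nonneg x) (div_pos (exp_pos (-V x)) hZ_pos)
    rw [log_div (exp_pos _).ne' hZ_pos.ne', log_exp] at h
    linarith
  have hpVZ : Integrable (fun x => p x * V x + p x * log Z) μ := hpV.add (hp.mul_const _)
  have h := integral_mono (hp.sub (hV.div_const Z)) (hp_log.add hpVZ) pointwise
  simp only [Pi.sub_apply, Pi.add_apply] at h
  rw [integral_sub hp (hV.div_const Z), integral_add hp_log hpVZ,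
    integral_add hpV (hp.mul_const _), integral_mul_const, integral_div, hp_one, ← hZ,
    div_self hZ_pos.ne'] at h
  linarith

end Gibbs

section Periodic

lemma integral_eq_integral_Ioi_add_comp_neg {E : Type*} [NormedAddCommGroup E] [NormedSpace ℝ E]
    {f : ℝ → E} (hf : Integrable f) : ∫ x, f x = ∫ x in Ioi 0, (f x + f (-x)) := by
  rw [integral_add hf.integrableOn hf.comp_neg.integrableOn, integral_comp_neg_Ioi, neg_zero,
    add_comm, intervalIntegral.integral_Iic_add_Ioi hf.integrableOn hf.integrableOn]

variable {s T : ℝ}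

lemma one_sub_exp_neg_smul_integral_Ioi_of_periodic {E : Type*} [NormedAddCommGroup E]
    [NormedSpace ℝ E] {w : ℝ → E} (hw : Function.Periodic w T) (hT : 0 ≤ T)
    (hint : IntegrableOn (fun x => exp (-(s * x)) • w x) (Ioi 0)) :
    (1 - exp (-(s * T))) • ∫ x in Ioi 0, exp (-(s * x)) • w x
      = ∫ x in 0..T, exp (-(s * x)) • w x := by
  have tail : ∫ x in Ioi T, exp (-(s * x)) • w x
      = exp (-(s * T)) • ∫ x in Ioi 0, exp (-(s * x)) • w x := by
    have preimage : (fun x => x + T) ⁻¹' Ioi T = Ioi 0 := by simp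
    rw [← (measurePreserving_add_right volume T).setIntegral_preimage_emb
      (measurableEmbedding_addRight T), preimage, ← integral_smul]
    refine integral_congr_ae (.of_forall fun x => ?_)
    simp only [hw x, smul_smul, ← exp_add]
    ring_nf
  rw [sub_smul, one_smul, ← tail, sub_eq_iff_eq_add,
    intervalIntegral.integral_interval_add_Ioi hint (hint.mono_set (Ioi_subset_Ioi hT))]

lemma integrable_exp_neg_mul_abs (hs : 0 < s) : Integrable fun x => exp (-(s * |x|)) := by
  refine .of_integral_ne_zero ?_
  rw [integral_comp_abs (f := fun x => exp (-(s * x)))]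
  simp [← neg_mul, integral_exp_mul_Ioi (neg_neg_of_pos hs), hs.ne']

variable {w : ℝ → ℝ}

lemma integrable_exp_neg_mul_abs_sub_mul_of_periodic (hs : 0 < s) (hT : T ≠ 0)
    (hw_cont : Continuous w) (hw : Function.Periodic w T) (b : ℝ) :
    Integrable fun x => exp (-(s * |x - b|)) * w x := by
  obtain ⟨C, hC⟩ := (hw.isBounded_of_continuous hT hw_cont).exists_norm_le
  exact ((integrable_exp_neg_mul_abs hs).comp_sub_right b).mul_bdd
    hw_cont.aestronglyMeasurable (.of_forall fun x => hC _ (mem_range_self x))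

lemma inv_one_sub_exp_neg_le {u : ℝ} (hu : 0 < u) : (1 - exp (-u))⁻¹ ≤ 1 + 1 / u := by
  have hexp : exp (-u) ≤ (u + 1)⁻¹ := by
    rw [exp_neg]
    exact inv_anti₀ (by positivity) (add_one_le_exp u)
  have hsub : u / (u + 1) ≤ 1 - exp (-u) := by
    calc u / (u + 1) = 1 - (u + 1)⁻¹ := by field_simp; ring
      _ ≤ 1 - exp (-u) := by gcongr
  calc (1 - exp (-u))⁻¹ ≤ (u / (u + 1))⁻¹ := inv_anti₀ (by positivity) hsub
    _ = 1 + 1 / u := by field_simp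

lemma integral_Ioi_exp_neg_mul_le_of_periodic (hs : 0 < s) (hT : 0 < T) (hw_cont : Continuous w)
    (hw_nonneg : 0 ≤ w) (hw : Function.Periodic w T) :
    ∫ x in Ioi 0, exp (-(s * x)) * w x ≤ (1 + 1 / (s * T)) * ∫ x in 0..T, w x := by
  have hint : IntegrableOn (fun x => exp (-(s * x)) * w x) (Ioi 0) :=
    (integrable_exp_neg_mul_abs_sub_mul_of_periodic hs hT.ne' hw_cont hw 0).integrableOn.congr_fun
      (fun x hx => by simp only [sub_zero, abs_of_pos (mem_Ioi.1 hx)]) measurableSet_Ioi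
  have one_period : ∫ x in 0..T, exp (-(s * x)) * w x ≤ ∫ x in 0..T, w x := by
    refine intervalIntegral.integral_mono_on hT.le
      (Continuous.intervalIntegrable (by fun_prop) _ _) (hw_cont.intervalIntegrable _ _) ?_
    intro x hx
    refine mul_le_of_le_one_left (hw_nonneg x) (exp_le_one_iff.2 ?_)
    exact neg_nonpos.2 (mul_nonneg hs.le hx.1)
  have hexp : 0 < 1 - exp (-(s * T)) := by
    rw [sub_pos, exp_lt_one_iff, neg_neg_iff_pos]
    positivity
  have geometric := one_sub_exp_neg_smul_integral_Ioi_of_periodic hw hT.le hint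
  simp only [smul_eq_mul] at geometric
  calc ∫ x in Ioi 0, exp (-(s * x)) * w x
      = (1 - exp (-(s * T)))⁻¹ * ∫ x in 0..T, exp (-(s * x)) * w x := by
        rw [← geometric, inv_mul_cancel_left₀ hexp.ne']
    _ ≤ (1 - exp (-(s * T)))⁻¹ * ∫ x in 0..T, w x := by gcongr
    _ ≤ (1 + 1 / (s * T)) * ∫ x in 0..T, w x := by
        have := intervalIntegral.integral_nonneg (μ := volume) hT.le fun x _ => hw_nonneg x
        gcongr
        exact inv_one_sub_exp_neg_le (by positivity)

lemma integral_exp_neg_mul_abs_sub_mul_le_of_periodic (hs : 0 < s) (hT : 0 < T)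
    (hw_cont : Continuous w) (hw_nonneg : 0 ≤ w) (hw : Function.Periodic w T) (b : ℝ) :
    ∫ x, exp (-(s * |x - b|)) * w x ≤ 2 * (1 + 1 / (s * T)) * ∫ x in 0..T, w x := by
  have period_right : ∫ x in 0..T, w (b + x) = ∫ x in 0..T, w x := by
    simpa using hw.intervalIntegral_add_eq b 0
  have period_left : ∫ x in 0..T, w (b - x) = ∫ x in 0..T, w x := by
    simpa using hw.intervalIntegral_add_eq (b - T) 0
  have hw_symm : Function.Periodic (fun x => w (b + x) + w (b - x)) T := fun x => by
    simp only [← add_assoc, hw (b + x), ← sub_sub, hw.sub_eq]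
  have hint : Integrable fun x => exp (-(s * |x|)) * w (b + x) := by
    simpa only [add_sub_cancel_left] using
      (integrable_exp_neg_mul_abs_sub_mul_of_periodic hs hT.ne' hw_cont hw b).comp_add_left b
  calc ∫ x, exp (-(s * |x - b|)) * w x
      = ∫ x, exp (-(s * |x|)) * w (b + x) := by
        rw [← integral_add_left_eq_self _ b]
        simp only [add_sub_cancel_left]
    _ = ∫ x in Ioi 0, exp (-(s * x)) * (w (b + x) + w (b - x)) := by
        rw [integral_eq_integral_Ioi_add_comp_neg hint]
        refine setIntegral_congr_fun measurableSet_Ioi fun x hx => ?_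
        simp only [abs_neg, abs_of_pos (mem_Ioi.1 hx), mul_add, sub_eq_add_neg]
    _ ≤ (1 + 1 / (s * T)) * ∫ x in 0..T, (w (b + x) + w (b - x)) :=
        integral_Ioi_exp_neg_mul_le_of_periodic hs hT (by fun_prop)
          (fun x => add_nonneg (hw_nonneg _) (hw_nonneg _)) hw_symm
    _ = 2 * (1 + 1 / (s * T)) * ∫ x in 0..T, w x := by
        rw [intervalIntegral.integral_add (Continuous.intervalIntegrable (by fun_prop) _ _)
          (Continuous.intervalIntegrable (by fun_prop) _ _), period_right, period_left]
        ring

end Periodic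

section SinePotential

variable {β : ℝ}

lemma periodic_exp_neg_mul_sin_sq : Function.Periodic (fun u => exp (-(β * sin u ^ 2))) π :=
  fun u => by simp only [sin_add_pi, neg_sq]

lemma integral_exp_neg_mul_sin_sq_le (hβ : 0 < β) :
    ∫ u in 0..π, exp (-(β * sin u ^ 2)) ≤ π / 2 * √(π / β) := by
  have centred : ∫ u in 0..π, exp (-(β * sin u ^ 2))
      = ∫ u in -(π / 2)..π / 2, exp (-(β * sin u ^ 2)) := by
    have h := (periodic_exp_neg_mul_sin_sq (β := β)).intervalIntegral_add_eq 0 (-(π / 2))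
    rwa [zero_add, show -(π / 2) + π = π / 2 by ring] at h
  have hgauss : Integrable fun u => exp (-(4 * β / π ^ 2) * u ^ 2) :=
    integrable_exp_neg_mul_sq (by positivity)
  have jordan : ∀ u ∈ Icc (-(π / 2)) (π / 2),
      exp (-(β * sin u ^ 2)) ≤ exp (-(4 * β / π ^ 2) * u ^ 2) := by
    intro u hu
    have h := pow_le_pow_left₀ (by positivity) (mul_abs_le_abs_sin (abs_le.2 hu)) 2
    rw [mul_pow, sq_abs, sq_abs] at h
    calc exp (-(β * sin u ^ 2)) ≤ exp (-(β * ((2 / π) ^ 2 * u ^ 2))) := by gcongr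
      _ = exp (-(4 * β / π ^ 2) * u ^ 2) := by ring_nf
  have hπ : -(π / 2) ≤ π / 2 := by linarith [pi_pos]
  calc ∫ u in 0..π, exp (-(β * sin u ^ 2))
      ≤ ∫ u in -(π / 2)..π / 2, exp (-(4 * β / π ^ 2) * u ^ 2) :=
        centred.trans_le (intervalIntegral.integral_mono_on hπ
          (Continuous.intervalIntegrable (by fun_prop) _ _) hgauss.intervalIntegrable jordan)
    _ ≤ ∫ u, exp (-(4 * β / π ^ 2) * u ^ 2) := by
        rw [intervalIntegral.integral_of_le hπ]
        exact setIntegral_le_integral hgauss (.of_forall fun u => (exp_pos _).le)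
    _ = √((π / 2) ^ 2 * (π / β)) := by
        rw [integral_gaussian]
        congr 1
        field_simp
        ring
    _ = π / 2 * √(π / β) := by rw [sqrt_mul (by positivity), sqrt_sq (by positivity)]

lemma integral_exp_neg_mul_abs_sub_mul_exp_neg_mul_sin_sq_le {s : ℝ} (hs : 0 < s) (hβ : 0 < β)
    (b : ℝ) :
    ∫ y, exp (-(s * |y - b|)) * exp (-(β * sin y ^ 2)) ≤ (π + 1 / s) * √(π / β) :=
  calc ∫ y, exp (-(s * |y - b|)) * exp (-(β * sin y ^ 2))
      ≤ 2 * (1 + 1 / (s * π)) * ∫ y in 0..π, exp (-(β * sin y ^ 2)) :=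
        integral_exp_neg_mul_abs_sub_mul_le_of_periodic hs pi_pos (by fun_prop)
          (fun y => (exp_pos _).le) periodic_exp_neg_mul_sin_sq b
    _ ≤ 2 * (1 + 1 / (s * π)) * (π / 2 * √(π / β)) := by
        gcongr
        exact integral_exp_neg_mul_sin_sq_le hβ
    _ = (π + 1 / s) * √(π / β) := by field_simp

variable {σ t : ℝ}

/- A shift by a period multiplies the two-sided exponential, unlike the Gaussian, by a constant on
each half-line; this makes its integral against a periodic function a geometric series. -/
lemma exp_neg_sq_div_le (x : ℝ) :
    exp (-(x ^ 2 / (2 * σ ^ 2))) ≤ exp (1 / 2) * exp (-(|x| / σ)) := by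
  rw [← exp_add, exp_le_exp]
  have hsq : x ^ 2 / (2 * σ ^ 2) = (|x| / σ) ^ 2 / 2 := by rw [div_pow, sq_abs]; ring
  nlinarith [sq_nonneg (|x| / σ - 1)]

lemma integrable_exp_neg_sq_div (hσ : σ ≠ 0) (a : ℝ) :
    Integrable fun x => exp (-((x - a) ^ 2 / (2 * σ ^ 2))) := by
  have h := (integrable_exp_neg_mul_sq (b := 1 / (2 * σ ^ 2)) (by positivity)).comp_sub_right a
  refine h.congr (.of_forall fun x => ?_)
  ring_nf

lemma integral_exp_neg_sq_div (hσ : 0 < σ) (a : ℝ) :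
    ∫ x, exp (-((x - a) ^ 2 / (2 * σ ^ 2))) = σ * √(2 * π) := by
  calc ∫ x, exp (-((x - a) ^ 2 / (2 * σ ^ 2))) = ∫ x, exp (-(x ^ 2 / (2 * σ ^ 2))) :=
        integral_sub_right_eq_self (fun x => exp (-(x ^ 2 / (2 * σ ^ 2)))) a
    _ = ∫ x, exp (-(1 / (2 * σ ^ 2)) * x ^ 2) := by
        congr with x
        ring_nf
    _ = √(σ ^ 2 * (2 * π)) := by
        rw [integral_gaussian]
        congr 1
        field_simp
    _ = σ * √(2 * π) := by rw [sqrt_mul (sq_nonneg σ), sqrt_sq hσ.le]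

lemma integrable_exp_neg_sq_div_add_mul_sin_sq (hσ : σ ≠ 0) (hβ : 0 ≤ β) (a t θ : ℝ) :
    Integrable fun x => exp (-((x - a) ^ 2 / (2 * σ ^ 2) + β * sin ((t * x - θ) / 2) ^ 2)) := by
  refine (integrable_exp_neg_sq_div hσ a).mono' (by fun_prop) (.of_forall fun x => ?_)
  rw [norm_of_nonneg (exp_pos _).le, exp_le_exp, neg_le_neg_iff]
  exact le_add_of_nonneg_right (by positivity)

lemma integral_exp_neg_sq_div_add_mul_sin_sq_le (hσ : 0 < σ) (hβ : 0 < β) (ht : t ≠ 0)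
    (a θ : ℝ) :
    ∫ x, exp (-((x - a) ^ 2 / (2 * σ ^ 2) + β * sin ((t * x - θ) / 2) ^ 2))
      ≤ exp (1 / 2) * ((σ + 2 * π / |t|) * √(π / β)) := by
  set s := 2 / (σ * |t|) with hs_def
  have hs : 0 < s := by positivity
  set F : ℝ → ℝ := fun y => exp (-(s * |y - (t * a - θ) / 2|)) * exp (-(β * sin y ^ 2)) with hF
  have hF_int : Integrable fun x => F (t / 2 * x - θ / 2) :=
    ((integrable_exp_neg_mul_abs_sub_mul_of_periodic hs pi_ne_zero (by fun_prop)
      periodic_exp_neg_mul_sin_sq _).comp_sub_right (θ / 2)).comp_mul_left' (by positivity)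
  have pointwise (x : ℝ) : exp (-((x - a) ^ 2 / (2 * σ ^ 2) + β * sin ((t * x - θ) / 2) ^ 2))
      ≤ exp (1 / 2) * F (t / 2 * x - θ / 2) := by
    have hy : t / 2 * x - θ / 2 = (t * x - θ) / 2 := by ring
    have hdist : s * |(t * x - θ) / 2 - (t * a - θ) / 2| = |x - a| / σ := by
      rw [show (t * x - θ) / 2 - (t * a - θ) / 2 = t * (x - a) / 2 by ring, abs_div, abs_mul,
        abs_two, hs_def]
      field_simp
    simp only [hF]
    rw [hy, hdist, neg_add, exp_add, ← mul_assoc]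
    gcongr
    exact exp_neg_sq_div_le (x - a)
  calc ∫ x, exp (-((x - a) ^ 2 / (2 * σ ^ 2) + β * sin ((t * x - θ) / 2) ^ 2))
      ≤ ∫ x, exp (1 / 2) * F (t / 2 * x - θ / 2) :=
        integral_mono (integrable_exp_neg_sq_div_add_mul_sin_sq hσ.ne' hβ.le a t θ)
          (hF_int.const_mul _) pointwise
    _ = exp (1 / 2) * (2 / |t| * ∫ y, F y) := by
        rw [integral_const_mul, Measure.integral_comp_mul_left (fun y => F (y - θ / 2)),
          integral_sub_right_eq_self F, inv_div, abs_div, abs_two, smul_eq_mul]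
    _ ≤ exp (1 / 2) * (2 / |t| * ((π + 1 / s) * √(π / β))) := by
        gcongr
        exact integral_exp_neg_mul_abs_sub_mul_exp_neg_mul_sin_sq_le hs hβ _
    _ = exp (1 / 2) * ((σ + 2 * π / |t|) * √(π / β)) := by
        rw [hs_def]
        field_simp
        ring

end SinePotential

section CharFn

variable {p : ℝ → ℝ}

lemma norm_charFn_eq_integral_cos (hp : Integrable p) (t : ℝ) :
    ‖charFn p t‖ = ∫ x, p x * cos (t * x - (charFn p t).arg) := by
  set θ := (charFn p t).arg with hθ
  have hint : Integrable fun x : ℝ =>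
      Complex.exp ((t * x - θ : ℝ) * Complex.I) * (p x : ℂ) := by
    refine hp.ofReal.bdd_mul (c := 1) (by fun_prop) (.of_forall fun x => ?_)
    rw [Complex.norm_exp_ofReal_mul_I]
  have rotated : (‖charFn p t‖ : ℂ)
      = ∫ x : ℝ, Complex.exp ((t * x - θ : ℝ) * Complex.I) * (p x : ℂ) := by
    calc (‖charFn p t‖ : ℂ) = Complex.exp (-(θ * Complex.I)) * charFn p t := by
          conv_rhs => rw [← Complex.norm_mul_exp_arg_mul_I (charFn p t), ← hθ]
          rw [mul_left_comm, ← Complex.exp_add, neg_add_cancel, Complex.exp_zero, mul_one]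
      _ = ∫ x : ℝ, Complex.exp ((t * x - θ : ℝ) * Complex.I) * (p x : ℂ) := by
          rw [charFn, ← integral_const_mul]
          congr with x
          rw [← mul_assoc, ← Complex.exp_add]
          push_cast
          ring_nf
  calc ‖charFn p t‖
      = ∫ x : ℝ, (Complex.exp ((t * x - θ : ℝ) * Complex.I) * (p x : ℂ)).re := by
        rw [← Complex.ofReal_re ‖charFn p t‖, rotated]
        exact (Complex.reCLM.integral_comp_comm hint).symm
    _ = ∫ x, p x * cos (t * x - θ) := by
        congr with x
        rw [Complex.re_mul_ofReal, Complex.exp_ofReal_mul_I_re, mul_comm]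

lemma integrable_mul_sin_sq (hp : Integrable p) (t θ : ℝ) :
    Integrable fun x => p x * sin ((t * x - θ) / 2) ^ 2 := by
  refine hp.mul_bdd (c := 1) (by fun_prop) (.of_forall fun x => ?_)
  rw [norm_of_nonneg (sq_nonneg _)]
  exact sin_sq_le_one _

lemma norm_charFn_eq_integral_sub_integral_sin_sq (hp : Integrable p) (t : ℝ) :
    ‖charFn p t‖
      = (∫ x, p x) - 2 * ∫ x, p x * sin ((t * x - (charFn p t).arg) / 2) ^ 2 := by
  rw [norm_charFn_eq_integral_cos hp, ← integral_const_mul,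
    ← integral_sub hp ((integrable_mul_sin_sq hp t _).const_mul 2)]
  congr with x
  rw [sin_sq_eq_half_sub, mul_div_cancel₀ _ two_ne_zero]
  ring

end CharFn

section EntDist

variable {p V : ℝ → ℝ} {a σ : ℝ}

lemma exp_neg_two_mul_entDist_le (hp : IsProbDensity p) (hσ : 0 < σ)
    (hlog : Integrable fun x => p x * log (p x)) (hpV : Integrable fun x => p x * V x)
    (hV : Integrable fun x => exp (-V x)) :
    exp (-2 * entDist p σ)
      ≤ exp (2 * ∫ x, p x * V x) * (∫ x, exp (-V x)) ^ 2 / (σ ^ 2 * (2 * π * exp 1)) := by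
  have gibbs := neg_integral_mul_log_le hp.2.1 hp.2.2 hlog hpV hV
  have hZ : 0 < ∫ x, exp (-V x) := integral_exp_pos hV
  have exp_two_mul_log {y : ℝ} (hy : 0 < y) : exp (2 * log y) = y ^ 2 := by
    rw [two_mul, exp_add, exp_log hy, sq]
  calc exp (-2 * entDist p σ)
      ≤ exp ((2 * ∫ x, p x * V x) + 2 * log (∫ x, exp (-V x))
          - 2 * log (σ * √(2 * π * exp 1))) := by
        rw [exp_le_exp, entDist]
        linarith
    _ = exp (2 * ∫ x, p x * V x) * (∫ x, exp (-V x)) ^ 2 / (σ ^ 2 * (2 * π * exp 1)) := by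
        rw [exp_sub, exp_add, exp_two_mul_log hZ, exp_two_mul_log (by positivity), mul_pow,
          sq_sqrt (by positivity)]

lemma integrable_mul_sq_div (hσ : σ ≠ 0) (hvar : ∫ x, (x - a) ^ 2 * p x = σ ^ 2) :
    Integrable fun x => p x * ((x - a) ^ 2 / (2 * σ ^ 2)) := by
  have h : Integrable fun x => (x - a) ^ 2 * p x :=
    .of_integral_ne_zero (hvar ▸ pow_ne_zero 2 hσ)
  refine (h.div_const (2 * σ ^ 2)).congr (.of_forall fun x => ?_)
  ring

lemma integral_mul_sq_div (hσ : σ ≠ 0) (hvar : ∫ x, (x - a) ^ 2 * p x = σ ^ 2) :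
    ∫ x, p x * ((x - a) ^ 2 / (2 * σ ^ 2)) = 1 / 2 := by
  calc ∫ x, p x * ((x - a) ^ 2 / (2 * σ ^ 2)) = ∫ x, (x - a) ^ 2 * p x / (2 * σ ^ 2) := by
        congr with x
        ring
    _ = 1 / 2 := by
        rw [integral_div, hvar]
        field_simp

lemma entDist_nonneg (hp : IsProbDensity p) (hσ : 0 < σ)
    (hvar : ∫ x, (x - a) ^ 2 * p x = σ ^ 2) (hlog : Integrable fun x => p x * log (p x)) :
    0 ≤ entDist p σ := by
  have h := exp_neg_two_mul_entDist_le hp hσ hlog (integrable_mul_sq_div hσ.ne' hvar)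
    (integrable_exp_neg_sq_div hσ.ne' a)
  rw [integral_mul_sq_div hσ.ne' hvar, integral_exp_neg_sq_div hσ, mul_pow,
    sq_sqrt (by positivity), mul_one_div_cancel two_ne_zero,
    show exp 1 * (σ ^ 2 * (2 * π)) = σ ^ 2 * (2 * π * exp 1) by ring,
    div_self (by positivity), exp_le_one_iff] at h
  linarith

lemma exp_neg_two_mul_entDist_le_of_integral_mul_sin_sq_le (hp : IsProbDensity p) (hσ : 0 < σ)
    (hvar : ∫ x, (x - a) ^ 2 * p x = σ ^ 2) (hlog : Integrable fun x => p x * log (p x))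
    {t θ ε : ℝ} (ht : t ≠ 0) (hε : 0 < ε) (hsin : ∫ x, p x * sin ((t * x - θ) / 2) ^ 2 ≤ ε) :
    exp (-2 * entDist p σ) ≤ exp 1 ^ 2 * (1 + 2 * π / (σ * |t|)) ^ 2 * ε := by
  set β := 1 / (2 * ε) with hβ_def
  have hβ : 0 < β := by positivity
  have hsq_int := integrable_mul_sq_div hσ.ne' hvar
  have hsin_int := (integrable_mul_sin_sq (integrable_of_integral_eq_one hp.2.2) t θ).const_mul β
  have hpV_eq (x : ℝ) : p x * ((x - a) ^ 2 / (2 * σ ^ 2) + β * sin ((t * x - θ) / 2) ^ 2)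
      = p x * ((x - a) ^ 2 / (2 * σ ^ 2)) + β * (p x * sin ((t * x - θ) / 2) ^ 2) := by ring
  have mean_le_one :
      ∫ x, p x * ((x - a) ^ 2 / (2 * σ ^ 2) + β * sin ((t * x - θ) / 2) ^ 2) ≤ 1 := by
    simp only [hpV_eq]
    rw [integral_add hsq_int hsin_int, integral_const_mul, integral_mul_sq_div hσ.ne' hvar]
    calc 1 / 2 + β * ∫ x, p x * sin ((t * x - θ) / 2) ^ 2 ≤ 1 / 2 + β * ε := by gcongr
      _ = 1 := by rw [hβ_def]; field_simp; norm_num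
  refine (exp_neg_two_mul_entDist_le hp hσ hlog
    ((hsq_int.add hsin_int).congr (.of_forall fun x => (hpV_eq x).symm))
    (integrable_exp_neg_sq_div_add_mul_sin_sq hσ.ne' hβ.le a t θ)).trans ?_
  calc _ ≤ exp (2 * 1) * (exp (1 / 2) * ((σ + 2 * π / |t|) * √(π / β))) ^ 2
          / (σ ^ 2 * (2 * π * exp 1)) := by
        gcongr
        exact integral_exp_neg_sq_div_add_mul_sin_sq_le hσ hβ ht a θ
    _ = exp 1 ^ 2 * (1 + 2 * π / (σ * |t|)) ^ 2 * ε := by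
        have exp_half_sq : exp (1 / 2) ^ 2 = exp 1 := by rw [← exp_nat_mul]; norm_num
        have exp_two : exp (2 * 1) = exp 1 ^ 2 := by rw [← exp_nat_mul]; norm_num
        rw [mul_pow, mul_pow, sq_sqrt (by positivity), exp_half_sq, exp_two, hβ_def]
        field_simp

lemma min_one_sq_mul_one_add_div_sq_le {s κ : ℝ} (hs : 0 < s) (hκ : 0 ≤ κ) :
    min 1 (s ^ 2) * (1 + κ / s) ^ 2 ≤ (1 + κ) ^ 2 := by
  obtain h | h := le_total 1 s
  · calc min 1 (s ^ 2) * (1 + κ / s) ^ 2 ≤ 1 * (1 + κ) ^ 2 := by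
          gcongr
          · exact min_le_left _ _
          · exact div_le_self hκ h
      _ = (1 + κ) ^ 2 := one_mul _
  · calc min 1 (s ^ 2) * (1 + κ / s) ^ 2 ≤ s ^ 2 * (1 + κ / s) ^ 2 := by
          gcongr
          exact min_le_right _ _
      _ = (s + κ) ^ 2 := by field_simp
      _ ≤ (1 + κ) ^ 2 := by gcongr

lemma min_mul_exp_neg_two_mul_entDist_le (hp : IsProbDensity p) (hσ : 0 < σ)
    (hvar : ∫ x, (x - a) ^ 2 * p x = σ ^ 2) (hlog : Integrable fun x => p x * log (p x))
    {t : ℝ} (ht : t ≠ 0) (θ : ℝ) :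
    min 1 (σ ^ 2 * t ^ 2) * exp (-2 * entDist p σ)
      ≤ (exp 1 * (1 + 2 * π)) ^ 2 * ∫ x, p x * sin ((t * x - θ) / 2) ^ 2 := by
  have hsin_nonneg : 0 ≤ ∫ x, p x * sin ((t * x - θ) / 2) ^ 2 :=
    integral_nonneg fun x => mul_nonneg (hp.2.1 x) (sq_nonneg _)
  have hmin := min_one_sq_mul_one_add_div_sq_le (s := σ * |t|) (by positivity) two_pi_pos.le
  rw [mul_pow, sq_abs] at hmin
  rw [← div_le_iff₀' (by positivity)]
  refine le_of_forall_gt_imp_ge_of_dense fun ε hε => ?_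
  have hε_pos : 0 < ε := hsin_nonneg.trans_lt hε
  rw [div_le_iff₀' (by positivity)]
  calc min 1 (σ ^ 2 * t ^ 2) * exp (-2 * entDist p σ)
      ≤ min 1 (σ ^ 2 * t ^ 2) * (exp 1 ^ 2 * (1 + 2 * π / (σ * |t|)) ^ 2 * ε) := by
        gcongr
        exact exp_neg_two_mul_entDist_le_of_integral_mul_sin_sq_le hp hσ hvar hlog ht hε_pos hε.le
    _ = min 1 (σ ^ 2 * t ^ 2) * (1 + 2 * π / (σ * |t|)) ^ 2 * (exp 1 ^ 2 * ε) := by ring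
    _ ≤ (1 + 2 * π) ^ 2 * (exp 1 ^ 2 * ε) := by gcongr
    _ = (exp 1 * (1 + 2 * π)) ^ 2 * ε := by ring

end EntDist

theorem charFn_bound_of_finite_entropy_general {p : ℝ → ℝ} {a σ : ℝ} (hp : IsProbDensity p)
    (hσ : 0 < σ) (hvar : ∫ x, (x - a) ^ 2 * p x = σ ^ 2)
    (hlog : Integrable fun x => p x * log (p x)) (t : ℝ) :
    ‖charFn p t‖
      ≤ 1 - 2 / (exp 1 * (1 + 2 * π)) ^ 2 * min 1 (σ ^ 2 * t ^ 2) * exp (-2 * entDist p σ) := by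
  have norm_eq := norm_charFn_eq_integral_sub_integral_sin_sq
    (integrable_of_integral_eq_one hp.2.2) t
  rw [hp.2.2] at norm_eq
  obtain rfl | ht := eq_or_ne t 0
  · have hsin : 0 ≤ ∫ x, p x * sin ((0 * x - (charFn p 0).arg) / 2) ^ 2 :=
      integral_nonneg fun x => mul_nonneg (hp.2.1 x) (sq_nonneg _)
    have norm_le_one : ‖charFn p 0‖ ≤ 1 := by linarith
    simpa using norm_le_one
  have h := min_mul_exp_neg_two_mul_entDist_le hp hσ hvar hlog ht (charFn p t).arg
  rw [← div_le_iff₀' (by positivity)] at h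
  rw [norm_eq, mul_assoc, div_mul_eq_mul_div, mul_div_assoc]
  gcongr

/-- Proposition 6.2: there is an absolute constant `c > 0` such that for any random
variable `X` with finite variance `σ² > 0`, absolutely continuous distribution with
density `p` and finite entropy, the characteristic function `f` of `X` satisfies
`|f(t)| ≤ 1 - c·min{1, σ²t²}·e^{-4 D(X)}` for all real `t`. -/
theorem charFn_bound_of_finite_entropy :
    ∃ c : ℝ, 0 < c ∧
      ∀ (p : ℝ → ℝ) (a σ : ℝ),
        IsProbDensity p →
        (∫ x, x * p x = a) →
        0 < σ →
        (∫ x, (x - a) ^ 2 * p x = σ ^ 2) →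
        Integrable (fun x => p x * Real.log (p x)) volume →
        ∀ t : ℝ, ‖charFn p t‖ ≤
          1 - c * min 1 (σ ^ 2 * t ^ 2) * Real.exp (-4 * entDist p σ) := by
  refine ⟨2 / (exp 1 * (1 + 2 * π)) ^ 2, by positivity, fun p a σ hp _ hσ hvar hlog t =>
    (charFn_bound_of_finite_entropy_general hp hσ hvar hlog t).trans ?_⟩
  have hD := entDist_nonneg hp hσ hvar hlog
  gcongr
  norm_num
end
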